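/- arXiv:2412.17233 — 2 statements merged into one kernel-verified Lean document; each statement's English description precedes it below -/
import Mathlib

section
/- Let A ∈ S_n^{>0} be a totally positive n×n real skew-symmetric matrix, and let I ⊆ {1,…,n} be a subset of even size. Then sgn(I,[n]) · Pf_I(A) > 0; that is, the Pfaffian Pf_I(A) is nonzero and has sign (−1)^{(Σ_{i∈I} i) − |I|(|I|+1)/2}. -/
noncomputable section

open Matrix

/-- `N = n(n-1)/2`, the number of parameters. -/
def Npar (n : ℕ) : ℕ := n * (n - 1) / 2

/-- The decreasing run `a, a-1, …, b` (empty if `b > a`). -/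
def decRun (a b : ℕ) : List ℕ := (List.range' b (a + 1 - b)).reverse

/-- The index sequence `(i_1, …, i_N)`: for `m = 1, …, ⌊n/2⌋` (here `m` is 0-based, so
`m+1` is the 1-based block index), concatenate `n`, the run `n-2, …, 2(m+1)-1`, and the
run `n-1, …, 2(m+1)`. -/
def wordD (n : ℕ) : List ℕ :=
  ((List.range (n / 2)).map (fun m =>
    n :: (decRun (n - 2) (2 * m + 1) ++ decRun (n - 1) (2 * m + 2)))).flatten

/-- The matrix `x_i(t)` (index `i` is 1-based, matrix positions are 1-based in the paper,
0-based here). -/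
def xMat (n : ℕ) (i : ℕ) (t : ℝ) : Matrix (Fin (2 * n)) (Fin (2 * n)) ℝ :=
  Matrix.of fun p q =>
    (if (p : ℕ) = (q : ℕ) then 1 else 0) +
    (if i < n then
        (if (p : ℕ) + 1 = i ∧ (q : ℕ) + 1 = i + 1 then t else 0)
      + (if (p : ℕ) + 1 = n + i + 1 ∧ (q : ℕ) + 1 = n + i then -t else 0)
     else
        (if (p : ℕ) + 1 = n - 1 ∧ (q : ℕ) + 1 = 2 * n then t else 0)
      + (if (p : ℕ) + 1 = n ∧ (q : ℕ) + 1 = 2 * n - 1 then -t else 0))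

/-- The product `x_{i_1}(t_1) ⋯ x_{i_N}(t_N)`; the parameter `t l` plays the role of
`t_{l+1}`. -/
def prodX (n : ℕ) (t : ℕ → ℝ) : Matrix (Fin (2 * n)) (Fin (2 * n)) ℝ :=
  ((List.range (Npar n)).map (fun l => xMat n ((wordD n).getD l 0) (t l))).prod

/-- The first block `X₁(t)` of the first `n` rows of the product. -/
def X1 (n : ℕ) (t : ℕ → ℝ) : Matrix (Fin n) (Fin n) ℝ :=
  Matrix.of fun p q =>
    prodX n t ⟨(p : ℕ), by have := p.isLt; omega⟩ ⟨(q : ℕ), by have := q.isLt; omega⟩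

/-- The second block `X₂(t)` of the first `n` rows of the product. -/
def X2 (n : ℕ) (t : ℕ → ℝ) : Matrix (Fin n) (Fin n) ℝ :=
  Matrix.of fun p q =>
    prodX n t ⟨(p : ℕ), by have := p.isLt; omega⟩ ⟨n + (q : ℕ), by have := q.isLt; omega⟩

/-- The skew-symmetric matrix `A(t) = X₁(t)⁻¹ · X₂(t)`. -/
def Amat (n : ℕ) (t : ℕ → ℝ) : Matrix (Fin n) (Fin n) ℝ := (X1 n t)⁻¹ * X2 n t

/-- The set `S_n^{>0}` of totally positive skew-symmetric matrices. -/
def Spos (n : ℕ) : Set (Matrix (Fin n) (Fin n) ℝ) :=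
  { A | ∃ t : ℕ → ℝ, (∀ i < Npar n, 0 < t i) ∧ A = Amat n t }

/-- The signed minor `M_{j,k}(A)`: `(-1)^{jk}` times the determinant of the submatrix of `A`
with (1-based) rows `{1,…,n-k-1} ∪ {n-k+j,…,n}` and columns `{1,…,n-j}`. -/
def Mminor (n j k : ℕ) (A : Matrix (Fin n) (Fin n) ℝ) : ℝ :=
  (-1 : ℝ) ^ (j * k) *
    Matrix.det (Matrix.of fun (p q : Fin (n - j)) =>
      A (if (p : ℕ) < n - k - 1
          then ⟨(p : ℕ), by have := p.isLt; omega⟩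
          else ⟨(p : ℕ) + j, by have := p.isLt; omega⟩)
        ⟨(q : ℕ), by have := q.isLt; omega⟩)

/-- The Pfaffian of an `m × m` matrix (intended for `m` even):
`Pf(B) = (1/(2^{m/2} (m/2)!)) Σ_σ sgn(σ) Π_i B_{σ(2i-1), σ(2i)}`. -/
def Pfaff {m : ℕ} (B : Matrix (Fin m) (Fin m) ℝ) : ℝ :=
  (1 / ((2 : ℝ) ^ (m / 2) * (Nat.factorial (m / 2) : ℝ))) *
    ∑ σ : Equiv.Perm (Fin m), ((Equiv.Perm.sign σ : ℤ) : ℝ) *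
      ∏ i : Fin (m / 2),
        B (σ ⟨2 * (i : ℕ), by have := i.isLt; omega⟩)
          (σ ⟨2 * (i : ℕ) + 1, by have := i.isLt; omega⟩)

/-- `Pf_I(A)`: the Pfaffian of the submatrix of `A` with rows and columns indexed by `I`
in increasing order. -/
def PfI {n : ℕ} (A : Matrix (Fin n) (Fin n) ℝ) (I : Finset (Fin n)) : ℝ :=
  Pfaff (Matrix.of fun (p q : Fin I.card) =>
    A ((I.orderIsoOfFin rfl p : Fin n)) ((I.orderIsoOfFin rfl q : Fin n)))

/-- `sgn(I,[n]) = (-1)^{(Σ_{i∈I} i) - |I|(|I|+1)/2}` (the elements of `I` are 1-based, so a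
0-based element `i` contributes `i+1`; the natural subtraction agrees with the integer one
since the sum of `|I|` distinct positive integers is at least `|I|(|I|+1)/2`). -/
def sgnSet {n : ℕ} (I : Finset (Fin n)) : ℝ :=
  (-1 : ℝ) ^ ((∑ i ∈ I, ((i : ℕ) + 1)) - I.card * (I.card + 1) / 2)

/-- The block matrix `[Id_n | A]`. -/
def IdA {n : ℕ} (A : Matrix (Fin n) (Fin n) ℝ) : Matrix (Fin n) (Fin (2 * n)) ℝ :=
  Matrix.of fun p q =>
    if h : (q : ℕ) < n then (if (p : ℕ) = (q : ℕ) then 1 else 0)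
    else A p ⟨(q : ℕ) - n, by have := q.isLt; omega⟩

/-- The full word `(j_1, …, j_{2N})`: `1, 2,1, 3,2,1, …, n-1,…,1` followed by `(i_1,…,i_N)`. -/
def wordFull (n : ℕ) : List ℕ :=
  (((List.range n).map (fun r => decRun r 1)).flatten) ++ wordD n

/-- `z(ε) = x_{j_1}(ε) ⋯ x_{j_{2N}}(ε)`. -/
def zeps (n : ℕ) (ε : ℝ) : Matrix (Fin (2 * n)) (Fin (2 * n)) ℝ :=
  ((wordFull n).map (fun i => xMat n i ε)).prod

/-- `Z(ε) = z(ε)ᵀ · z(ε)`. -/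
def Zeps (n : ℕ) (ε : ℝ) : Matrix (Fin (2 * n)) (Fin (2 * n)) ℝ :=
  (zeps n ε)ᵀ * zeps n ε

/-- First block `Y₁(ε)` of `[Id_n | A] · Z(ε)`. -/
def Y1 {n : ℕ} (A : Matrix (Fin n) (Fin n) ℝ) (ε : ℝ) : Matrix (Fin n) (Fin n) ℝ :=
  Matrix.of fun p q => (IdA A * Zeps n ε) p ⟨(q : ℕ), by have := q.isLt; omega⟩

/-- Second block `Y₂(ε)` of `[Id_n | A] · Z(ε)`. -/
def Y2 {n : ℕ} (A : Matrix (Fin n) (Fin n) ℝ) (ε : ℝ) : Matrix (Fin n) (Fin n) ℝ :=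
  Matrix.of fun p q => (IdA A * Zeps n ε) p ⟨n + (q : ℕ), by have := q.isLt; omega⟩

/-- The simple generators `s_i` of the Weyl group `W` of `SO(2n)`, as permutations of
`{1,…,2n}` (0-based here): for `1 ≤ i ≤ n-1`, `s_i = (i,i+1)(n+i,n+i+1)`; for `i = n`,
`s_n = (n,2n-1)(n-1,2n)`. -/
def sGen (n : ℕ) (i : ℕ) : Equiv.Perm (Fin (2 * n)) :=
  if h : 1 ≤ i ∧ i ≤ n - 1 ∧ 2 ≤ n then
    Equiv.swap ⟨i - 1, by omega⟩ ⟨i, by omega⟩ *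
      Equiv.swap ⟨n + i - 1, by omega⟩ ⟨n + i, by omega⟩
  else if h2 : i = n ∧ 2 ≤ n then
    Equiv.swap ⟨n - 1, by omega⟩ ⟨2 * n - 2, by omega⟩ *
      Equiv.swap ⟨n - 2, by omega⟩ ⟨2 * n - 1, by omega⟩
  else 1

/-- Membership in the Weyl group `W`: `σ(n+i) ≡ n + σ(i) (mod 2n)` for all `1 ≤ i ≤ n`,
and the number of `i ∈ {1,…,n}` with `σ(i) > n` is even. (All positions are 0-based; a
0-based value `v` corresponds to the 1-based value `v+1`.) -/
def inW (n : ℕ) (σ : Equiv.Perm (Fin (2 * n))) : Prop :=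
  (∀ i : Fin n,
    ((σ ⟨n + (i : ℕ), by have := i.isLt; omega⟩ : Fin (2 * n)) : ℕ)
      ≡ n + ((σ ⟨(i : ℕ), by have := i.isLt; omega⟩ : Fin (2 * n)) : ℕ) [MOD 2 * n]) ∧
  Even (Finset.univ.filter (fun i : Fin n =>
    n ≤ ((σ ⟨(i : ℕ), by have := i.isLt; omega⟩ : Fin (2 * n)) : ℕ))).card

/-- `I_w = {i ∈ {1,…,n} : w(i) > n}`, as a finset of `Fin n` (0-based). -/
def Iset (n : ℕ) (σ : Equiv.Perm (Fin (2 * n))) : Finset (Fin n) :=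
  Finset.univ.filter (fun i : Fin n =>
    n ≤ ((σ ⟨(i : ℕ), by have := i.isLt; omega⟩ : Fin (2 * n)) : ℕ))

/-- The parabolic subgroup `W_{[n-1]}` generated by `s_1, …, s_{n-1}`. -/
def Wpar (n : ℕ) : Subgroup (Equiv.Perm (Fin (2 * n))) :=
  Subgroup.closure { σ | ∃ i, 1 ≤ i ∧ i ≤ n - 1 ∧ σ = sGen n i }

/-- The standard basis vector `e_i` of `ℝ^{2n}` (with `i : Fin n` 0-based, sitting in
position `i` of the first block). -/
def evec (n : ℕ) (i : Fin n) : Fin (2 * n) → ℝ :=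
  Pi.single ⟨(i : ℕ), by have := i.isLt; omega⟩ 1

/-- The standard basis vector `f_j` of `ℝ^{2n}` (position `n + j`). -/
def fvec (n : ℕ) (j : Fin n) : Fin (2 * n) → ℝ :=
  Pi.single ⟨n + (j : ℕ), by have := j.isLt; omega⟩ 1

/-- `f = ι(f_1)⋯ι(f_n)` in the Clifford algebra. -/
def fElt {n : ℕ} (Q : QuadraticForm ℝ (Fin (2 * n) → ℝ)) : CliffordAlgebra Q :=
  (List.ofFn (fun j : Fin n => CliffordAlgebra.ι Q (fvec n j))).prod

/-- `e_S = ι(e_{l_1})⋯ι(e_{l_s})` where `l_1 < ⋯ < l_s` enumerates `S`. -/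
def eProd {n : ℕ} (Q : QuadraticForm ℝ (Fin (2 * n) → ℝ)) (S : Finset (Fin n)) :
    CliffordAlgebra Q :=
  ((S.sort (· ≤ ·)).map (fun l => CliffordAlgebra.ι Q (evec n l))).prod

/-- `h = Π_{i=1}^n ι(e_i + Σ_j A_{ij} f_j)` (product in increasing order of `i`). -/
def hElt {n : ℕ} (Q : QuadraticForm ℝ (Fin (2 * n) → ℝ)) (A : Matrix (Fin n) (Fin n) ℝ) :
    CliffordAlgebra Q :=
  (List.ofFn (fun i : Fin n =>
    CliffordAlgebra.ι Q (evec n i + ∑ j : Fin n, A i j • fvec n j))).prod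

/-- The sorted list of the (1-based) elements of `S ⊆ {1,…,n}`. -/
def valsOf {n : ℕ} (S : Finset (Fin n)) : List ℕ :=
  (S.sort (· ≤ ·)).map (fun i => (i : ℕ) + 1)

/-- The word `w_1 w_2 ⋯ w_r` where
`w_m = s_n (s_{n-2}⋯s_{i_{2m-1}}) (s_{n-1}⋯s_{i_{2m}})` and `vals` lists `i_1 < i_2 < ⋯`
(1-based); `m` is 0-based here. -/
def uWord (n r : ℕ) (vals : List ℕ) : List ℕ :=
  ((List.range r).map (fun m =>
    n :: (decRun (n - 2) (vals.getD (2 * m) 0) ++ decRun (n - 1) (vals.getD (2 * m + 1) 0)))).flatten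

/-- The permutation `u = w_1 w_2 ⋯ w_r`. -/
def uPerm (n r : ℕ) (vals : List ℕ) : Equiv.Perm (Fin (2 * n)) :=
  ((uWord n r vals).map (sGen n)).prod

/-- `L = r + Σ_{m=1}^{r} ((n-1-i_{2m-1}) + (n-i_{2m}))`. -/
def Lval (n r : ℕ) (vals : List ℕ) : ℕ :=
  r + ∑ m ∈ Finset.range r, ((n - 1 - vals.getD (2 * m) 0) + (n - vals.getD (2 * m + 1) 0))

def uu {m k : ℕ} (h : m = 2 * k) (i : Fin k) : Fin m := ⟨2 * (i : ℕ), by have := i.isLt; omega⟩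
def vv {m k : ℕ} (h : m = 2 * k) (i : Fin k) : Fin m := ⟨2 * (i : ℕ) + 1, by have := i.isLt; omega⟩

def pfs {m k : ℕ} (h : m = 2 * k) (B : Matrix (Fin m) (Fin m) ℝ) : ℝ :=
  ∑ σ : Equiv.Perm (Fin m), ((Equiv.Perm.sign σ : ℤ) : ℝ) *
      ∏ i : Fin k, B (σ (uu h i)) (σ (vv h i))

lemma Pfaff_eq {m k : ℕ} (h : m = 2 * k) (B : Matrix (Fin m) (Fin m) ℝ) :
    Pfaff B = (1 / ((2 : ℝ) ^ k * (Nat.factorial k : ℝ))) * pfs h B := by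
  have h2 : k = m / 2 := by omega
  subst h2
  rfl

lemma uu_ne_vv {m k : ℕ} (h : m = 2 * k) (i j : Fin k) : uu h i ≠ vv h j := by
  intro hh
  have := congrArg Fin.val hh
  simp only [uu, vv] at this
  omega

lemma uu_inj {m k : ℕ} (h : m = 2 * k) {i j : Fin k} (hh : uu h i = uu h j) : i = j := by
  have := congrArg Fin.val hh
  simp only [uu] at this
  exact Fin.ext (by omega)

lemma vv_inj {m k : ℕ} (h : m = 2 * k) {i j : Fin k} (hh : vv h i = vv h j) : i = j := by
  have := congrArg Fin.val hh
  simp only [vv] at this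
  exact Fin.ext (by omega)

lemma uu_or_vv {m k : ℕ} (h : m = 2 * k) (x : Fin m) : ∃ i, x = uu h i ∨ x = vv h i := by
  have := x.isLt
  refine ⟨⟨x.val / 2, by omega⟩, ?_⟩
  rcases Nat.even_or_odd' x.val with ⟨c, hc | hc⟩
  · left; apply Fin.ext; simp only [uu]; omega
  · right; apply Fin.ext; simp only [vv]; omega

lemma pfs_linear {m k : ℕ} (h : m = 2 * k) (B B' B'' : Matrix (Fin m) (Fin m) ℝ) (p : Fin m) (t : ℝ)
    (h1 : ∀ x y, x ≠ p → y ≠ p → B x y = B' x y ∧ B'' x y = B' x y)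
    (h2 : ∀ y, y ≠ p → B p y = B' p y + t * B'' p y)
    (h3 : ∀ y, y ≠ p → B y p = B' y p + t * B'' y p) :
    pfs h B = pfs h B' + t * pfs h B'' := by
  unfold pfs
  rw [Finset.mul_sum, ← Finset.sum_add_distrib]
  refine Finset.sum_congr rfl fun σ _ => ?_
  obtain ⟨j, hj⟩ := uu_or_vv h (σ⁻¹ p)
  have hj' : σ (uu h j) = p ∨ σ (vv h j) = p := by
    rcases hj with hj | hj
    · left; rw [← hj]; simp
    · right; rw [← hj]; simp
  have key : ∀ i ∈ Finset.univ.erase j, σ (uu h i) ≠ p ∧ σ (vv h i) ≠ p := by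
    intro i hi
    have hij : i ≠ j := Finset.ne_of_mem_erase hi
    rcases hj' with hj' | hj'
    · rw [← hj']
      exact ⟨fun e => hij (uu_inj h (σ.injective e)), fun e => uu_ne_vv h _ _ (σ.injective e).symm⟩
    · rw [← hj']
      exact ⟨fun e => uu_ne_vv h _ _ (σ.injective e), fun e => hij (vv_inj h (σ.injective e))⟩
  have e1 : ∏ i ∈ Finset.univ.erase j, B (σ (uu h i)) (σ (vv h i))
      = ∏ i ∈ Finset.univ.erase j, B' (σ (uu h i)) (σ (vv h i)) :=
    Finset.prod_congr rfl fun i hi => (h1 _ _ (key i hi).1 (key i hi).2).1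
  have e2 : ∏ i ∈ Finset.univ.erase j, B'' (σ (uu h i)) (σ (vv h i))
      = ∏ i ∈ Finset.univ.erase j, B' (σ (uu h i)) (σ (vv h i)) :=
    Finset.prod_congr rfl fun i hi => (h1 _ _ (key i hi).1 (key i hi).2).2
  have e3 : B (σ (uu h j)) (σ (vv h j)) =
      B' (σ (uu h j)) (σ (vv h j)) + t * B'' (σ (uu h j)) (σ (vv h j)) := by
    have hne : σ (uu h j) ≠ σ (vv h j) := fun e => uu_ne_vv h _ _ (σ.injective e)
    rcases hj' with hj' | hj'
    · rw [hj'] at hne ⊢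
      exact h2 _ hne.symm
    · rw [hj'] at hne ⊢
      exact h3 _ hne
  rw [← Finset.mul_prod_erase _ (fun i => B (σ (uu h i)) (σ (vv h i))) (Finset.mem_univ j),
    ← Finset.mul_prod_erase _ (fun i => B' (σ (uu h i)) (σ (vv h i))) (Finset.mem_univ j),
    ← Finset.mul_prod_erase _ (fun i => B'' (σ (uu h i)) (σ (vv h i))) (Finset.mem_univ j),
    e1, e2, e3]
  ring

lemma pfs_alt {m k : ℕ} (h : m = 2 * k) (B : Matrix (Fin m) (Fin m) ℝ) (p q : Fin m) (hpq : p ≠ q)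
    (hB : ∀ x y, B (Equiv.swap p q x) (Equiv.swap p q y) = B x y) : pfs h B = 0 := by
  have : pfs h B = - pfs h B := by
    conv_lhs => rw [pfs, ← Equiv.sum_comp (Equiv.mulLeft (Equiv.swap p q))]
    rw [pfs, ← Finset.sum_neg_distrib]
    refine Finset.sum_congr rfl fun σ _ => ?_
    simp [Equiv.Perm.sign_swap hpq, hB]
  linarith

lemma prod_add_disj {k : ℕ} (b c : Fin k → ℝ) (hc : ∀ i j, i ≠ j → c i = 0 ∨ c j = 0) :
    ∏ i, (b i + c i) = ∏ i, b i + ∑ j, c j * ∏ i ∈ Finset.univ.erase j, b i := by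
  by_cases h0 : ∀ i, c i = 0
  · simp [h0]
  · push Not at h0
    obtain ⟨j, hj⟩ := h0
    have hz : ∀ i, i ≠ j → c i = 0 := fun i hi => (hc i j hi).resolve_right hj
    rw [Finset.sum_eq_single j (fun i _ hi => by rw [hz i hi, zero_mul]) (by simp),
      ← Finset.mul_prod_erase _ _ (Finset.mem_univ j), ← Finset.mul_prod_erase _ b (Finset.mem_univ j)]
    have : ∏ i ∈ Finset.univ.erase j, (b i + c i) = ∏ i ∈ Finset.univ.erase j, b i :=
      Finset.prod_congr rfl fun i hi => by rw [hz i (Finset.ne_of_mem_erase hi), add_zero]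
    rw [this]; ring

def pairT {m k : ℕ} (h : m = 2 * k) (B C : Matrix (Fin m) (Fin m) ℝ) (j : Fin k) : ℝ :=
  ∑ σ : Equiv.Perm (Fin m), ((Equiv.Perm.sign σ : ℤ) : ℝ) *
    (C (σ (uu h j)) (σ (vv h j)) * ∏ i ∈ Finset.univ.erase j, B (σ (uu h i)) (σ (vv h i)))

lemma pairT_eq {m k : ℕ} (h : m = 2 * k) (B C : Matrix (Fin m) (Fin m) ℝ) (j l : Fin k) :
    pairT h B C j = pairT h B C l := by
  by_cases hjl : j = l
  · rw [hjl]
  set τ : Equiv.Perm (Fin m) := Equiv.swap (uu h j) (uu h l) * Equiv.swap (vv h j) (vv h l) with hτ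
  have hu : ∀ i, τ (uu h i) = uu h (Equiv.swap j l i) := by
    intro i
    rw [hτ, Equiv.Perm.mul_apply, Equiv.swap_apply_of_ne_of_ne (uu_ne_vv h _ _) (uu_ne_vv h _ _)]
    exact (show Function.Injective (uu h) from fun a b hh => uu_inj h hh).map_swap j l i |>.symm
  have hv : ∀ i, τ (vv h i) = vv h (Equiv.swap j l i) := by
    intro i
    rw [hτ, Equiv.Perm.mul_apply]
    rw [← (show Function.Injective (vv h) from fun a b hh => vv_inj h hh).map_swap j l i]
    rw [Equiv.swap_apply_of_ne_of_ne (uu_ne_vv h _ _).symm (uu_ne_vv h _ _).symm]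
  have hs : Equiv.Perm.sign τ = 1 := by
    rw [hτ, Equiv.Perm.sign_mul, Equiv.Perm.sign_swap, Equiv.Perm.sign_swap]
    · simp
    · exact fun e => hjl (vv_inj h e)
    · exact fun e => hjl (uu_inj h e)
  unfold pairT
  rw [← Equiv.sum_comp (Equiv.mulRight τ)]
  refine Finset.sum_congr rfl fun σ _ => ?_
  simp only [Equiv.coe_mulRight, Equiv.Perm.sign_mul, hs, mul_one, Equiv.Perm.mul_apply, hu, hv,
    Equiv.swap_apply_left]
  congr 2
  refine Finset.prod_equiv (Equiv.swap j l) ?_ ?_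
  · intro i
    simp only [Finset.mem_erase, Finset.mem_univ, and_true]
    rw [Ne, Ne, Equiv.swap_apply_eq_iff, Equiv.swap_apply_right]
  · intro i _; rfl

lemma pairT_last {k : ℕ} (h : 2 * (k + 1) = 2 * (k + 1)) (B C : Matrix (Fin (2 * (k + 1))) (Fin (2 * (k + 1))) ℝ)
    (t : ℝ)
    (hC1 : C (uu h (Fin.last k)) (vv h (Fin.last k)) = t)
    (hC2 : C (vv h (Fin.last k)) (uu h (Fin.last k)) = -t)
    (hC3 : ∀ x y, ¬ (x = uu h (Fin.last k) ∧ y = vv h (Fin.last k)) →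
      ¬ (x = vv h (Fin.last k) ∧ y = uu h (Fin.last k)) → C x y = 0) :
    pairT h B C (Fin.last k) =
      2 * t * pfs (m := 2 * k) rfl (B.submatrix (Fin.castLE (by omega)) (Fin.castLE (by omega))) := by
  set U := uu h (Fin.last k) with hU
  set V := vv h (Fin.last k) with hV
  have hUV : U ≠ V := uu_ne_vv h _ _
  set G : Equiv.Perm (Fin (2 * (k + 1))) → ℝ := fun σ => ((Equiv.Perm.sign σ : ℤ) : ℝ) *
    ∏ i ∈ Finset.univ.erase (Fin.last k), B (σ (uu h i)) (σ (vv h i)) with hG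
  have hGs : ∀ σ, G (σ * Equiv.swap U V) = - G σ := by
    intro σ
    simp only [hG, Equiv.Perm.sign_mul, Equiv.Perm.sign_swap hUV]
    have : ∏ i ∈ Finset.univ.erase (Fin.last k), B ((σ * Equiv.swap U V) (uu h i)) ((σ * Equiv.swap U V) (vv h i))
      = ∏ i ∈ Finset.univ.erase (Fin.last k), B (σ (uu h i)) (σ (vv h i)) := by
      refine Finset.prod_congr rfl fun i hi => ?_
      have hi' := Finset.ne_of_mem_erase hi
      rw [Equiv.Perm.mul_apply, Equiv.Perm.mul_apply,
        Equiv.swap_apply_of_ne_of_ne (fun e => hi' (uu_inj h e)) (uu_ne_vv h _ _),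
        Equiv.swap_apply_of_ne_of_ne (uu_ne_vv h _ _).symm (fun e => hi' (vv_inj h e))]
    rw [this]; simp
  have hsplit : pairT h B C (Fin.last k) =
      ∑ σ : Equiv.Perm (Fin (2 * (k + 1))), (if σ U = U ∧ σ V = V then t * G σ else 0)
      + ∑ σ : Equiv.Perm (Fin (2 * (k + 1))), (if σ U = V ∧ σ V = U then - t * G σ else 0) := by
    rw [pairT, ← Finset.sum_add_distrib]
    refine Finset.sum_congr rfl fun σ _ => ?_
    by_cases c1 : σ U = U ∧ σ V = V
    · have c2 : ¬ (σ U = V ∧ σ V = U) := fun e => hUV (c1.1.symm.trans e.1)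
      rw [if_pos c1, if_neg c2, ← hU, ← hV, c1.1, c1.2, hC1]
      simp only [hG]; ring
    · by_cases c2 : σ U = V ∧ σ V = U
      · rw [if_neg c1, if_pos c2, ← hU, ← hV, c2.1, c2.2, hC2]
        simp only [hG]; ring
      · rw [if_neg c1, if_neg c2, ← hU, ← hV, hC3 _ _ c1 c2]; ring
  have hsec : ∑ σ : Equiv.Perm (Fin (2 * (k + 1))), (if σ U = V ∧ σ V = U then - t * G σ else 0)
      = ∑ σ : Equiv.Perm (Fin (2 * (k + 1))), (if σ U = U ∧ σ V = V then t * G σ else 0) := by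
    rw [← Equiv.sum_comp (Equiv.mulRight (Equiv.swap U V))]
    refine Finset.sum_congr rfl fun σ _ => ?_
    simp only [Equiv.coe_mulRight, hGs, Equiv.Perm.mul_apply, Equiv.swap_apply_left,
      Equiv.swap_apply_right, and_comm, neg_mul_neg]
  rw [hsplit, hsec, ← two_mul, mul_assoc]
  congr 1
  rw [← Finset.sum_filter, ← Finset.mul_sum]
  congr 1
  symm
  let f : Fin (2 * k) ≃ {x : Fin (2 * (k + 1)) // (x : ℕ) < 2 * k} :=
    { toFun := fun x => ⟨Fin.castLE (by omega) x, x.isLt⟩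
      invFun := fun x => ⟨x.1, x.2⟩
      left_inv := fun x => rfl
      right_inv := fun x => rfl }
  have hfc : ∀ (σ : Equiv.Perm (Fin (2 * k))) (x : Fin (2 * k)), σ.extendDomain f (Fin.castLE (by omega) x)
      = Fin.castLE (by omega) (σ x) := fun σ x => Equiv.Perm.extendDomain_apply_image σ f x
  have hUn : ¬ ((U : ℕ) < 2 * k) := by simp [hU, uu]
  have hVn : ¬ ((V : ℕ) < 2 * k) := by simp [hV, vv]
  rw [pfs]
  refine Finset.sum_bij (fun σ _ => σ.extendDomain f) ?_ ?_ ?_ ?_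
  · intro σ _
    simp only [Finset.mem_filter, Finset.mem_univ, true_and]
    exact ⟨Equiv.Perm.extendDomain_apply_not_subtype σ f hUn,
      Equiv.Perm.extendDomain_apply_not_subtype σ f hVn⟩
  · intro σ _ σ' _ e
    ext x
    have := congrArg (fun τ => ((τ (Fin.castLE (by omega) x) : Fin (2 * (k + 1))) : ℕ)) e
    simpa [hfc] using this
  · intro τ hτ
    simp only [Finset.mem_filter, Finset.mem_univ, true_and] at hτ
    have hcl : ∀ x : Fin (2 * (k + 1)), ¬ ((x : ℕ) < 2 * k) → x = U ∨ x = V := by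
      intro x hx
      have := x.isLt
      rcases (by omega : (x : ℕ) = 2 * k ∨ (x : ℕ) = 2 * k + 1) with e | e
      · left; apply Fin.ext; simp [hU, uu, e]
      · right; apply Fin.ext; simp [hV, vv, e]
    have hfix : ∀ x : Fin (2 * (k + 1)), ¬ ((x : ℕ) < 2 * k) → τ x = x := by
      intro x hx
      rcases hcl x hx with e | e
      · rw [e]; exact hτ.1
      · rw [e]; exact hτ.2
    have hst : ∀ x : Fin (2 * (k + 1)), ((τ x : Fin _) : ℕ) < 2 * k ↔ (x : ℕ) < 2 * k := by
      intro x
      constructor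
      · intro hx
        by_contra hx'
        rw [hfix x hx'] at hx
        exact hx' hx
      · intro hx
        by_contra hx'
        have := hfix _ hx'
        rw [τ.injective this] at hx'
        exact hx' hx
    refine ⟨f.symm.permCongr (τ.subtypePerm hst), Finset.mem_univ _, ?_⟩
    ext x
    by_cases hx : (x : ℕ) < 2 * k
    · rw [Equiv.Perm.extendDomain_apply_subtype _ f hx]
      simp
    · rw [Equiv.Perm.extendDomain_apply_not_subtype _ f hx, hfix x hx]
  · intro σ _
    simp only [hG, Equiv.Perm.sign_extendDomain]
    congr 1
    have he : (Finset.univ.erase (Fin.last k)) = Finset.univ.map (Fin.castSuccEmb (n := k)) := by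
      ext x
      simp only [Finset.mem_erase, Finset.mem_univ, and_true, Finset.mem_map, true_and]
      exact Fin.exists_castSucc_eq.symm
    rw [he, Finset.prod_map]
    refine Finset.prod_congr rfl fun i _ => ?_
    rw [Matrix.submatrix_apply, ← hfc, ← hfc]
    rfl

lemma Pfaff_pair {k : ℕ} (B C : Matrix (Fin (2 * (k + 1))) (Fin (2 * (k + 1))) ℝ)
    (t : ℝ) (U V : Fin (2 * (k + 1))) (hU : (U : ℕ) = 2 * k) (hV : (V : ℕ) = 2 * k + 1)
    (hC1 : C U V = t) (hC2 : C V U = -t)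
    (hC3 : ∀ x y, ¬ (x = U ∧ y = V) → ¬ (x = V ∧ y = U) → C x y = 0) :
    Pfaff (B + C) = Pfaff B +
      t * Pfaff (B.submatrix (Fin.castLE (by omega) : Fin (2 * k) → _) (Fin.castLE (by omega) : Fin (2 * k) → _)) := by
  have h : 2 * (k + 1) = 2 * (k + 1) := rfl
  have hU' : U = uu h (Fin.last k) := by apply Fin.ext; simp [uu, hU]
  have hV' : V = vv h (Fin.last k) := by apply Fin.ext; simp [vv, hV]
  have hUV : U ≠ V := fun e => by rw [e] at hU; omega
  have key : pfs h (B + C) = pfs h B + 2 * (k + 1) * t *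
      pfs (m := 2 * k) rfl (B.submatrix (Fin.castLE (by omega)) (Fin.castLE (by omega))) := by
    have : pfs h (B + C) = pfs h B + ∑ j, pairT h B C j := by
      unfold pfs pairT
      rw [Finset.sum_comm, ← Finset.sum_add_distrib]
      refine Finset.sum_congr rfl fun σ _ => ?_
      rw [← Finset.mul_sum, ← mul_add]
      congr 1
      refine prod_add_disj (fun i => B (σ (uu h i)) (σ (vv h i))) (fun i => C (σ (uu h i)) (σ (vv h i))) ?_
      intro i j hij
      by_contra hcon
      push Not at hcon
      have hd : ∀ i, C (σ (uu h i)) (σ (vv h i)) ≠ 0 → σ (uu h i) = U ∨ σ (vv h i) = U := by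
        intro i hi
        by_contra hh
        push Not at hh
        exact hi (hC3 _ _ (fun e => hh.1 e.1) (fun e => hh.2 e.2))
      rcases hd i hcon.1 with e1 | e1 <;> rcases hd j hcon.2 with e2 | e2
      · exact hij (uu_inj h (σ.injective (e1.trans e2.symm)))
      · exact uu_ne_vv h _ _ (σ.injective (e1.trans e2.symm))
      · exact uu_ne_vv h _ _ (σ.injective (e2.trans e1.symm))
      · exact hij (vv_inj h (σ.injective (e1.trans e2.symm)))
    rw [this, Finset.sum_congr rfl (fun j _ => pairT_eq h B C j (Fin.last k)),
      pairT_last h B C t (by rw [← hU', ← hV', hC1]) (by rw [← hU', ← hV', hC2])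
        (by rw [← hU', ← hV']; exact hC3)]
    simp
    ring
  rw [Pfaff_eq h, Pfaff_eq h, Pfaff_eq (m := 2 * k) rfl, key, Nat.factorial_succ]
  have : (Nat.factorial k : ℝ) ≠ 0 := by exact_mod_cast Nat.factorial_ne_zero k
  have h3 : (k : ℝ) + 1 ≠ 0 := by positivity
  push_cast
  field_simp
  ring

lemma PfI_eq {n : ℕ} (A : Matrix (Fin n) (Fin n) ℝ) (I : Finset (Fin n)) (m : ℕ) (h : I.card = m)
    (f : Fin m → Fin n) (hf : StrictMono f) (hfI : ∀ x, f x ∈ I) :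
    PfI A I = Pfaff (A.submatrix f f) := by
  subst h
  have : f = I.orderEmbOfFin rfl := Finset.orderEmbOfFin_unique rfl hfI hf
  subst this
  rfl

lemma sum_ge {n : ℕ} (I : Finset (Fin n)) :
    I.card * (I.card + 1) / 2 ≤ ∑ i ∈ I, ((i : ℕ) + 1) := by
  suffices I.card * (I.card + 1) ≤ 2 * ∑ i ∈ I, ((i : ℕ) + 1) by omega
  induction I using Finset.induction_on_max with
  | empty => simp
  | insert a s hs ih =>
    have ha : a ∉ s := fun h => lt_irrefl _ (hs a h)
    rw [Finset.sum_insert ha, Finset.card_insert_of_notMem ha]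
    have hc : s.card ≤ a := by
      have : s ⊆ Finset.Iio a := fun x hx => Finset.mem_Iio.2 (hs x hx)
      have := Finset.card_le_card this
      simpa using this
    nlinarith

lemma sgnSet_eq {n : ℕ} (I : Finset (Fin n)) :
    sgnSet I = (-1 : ℝ) ^ ((∑ i ∈ I, ((i : ℕ) + 1)) + I.card * (I.card + 1) / 2) := by
  have := sum_ge I
  unfold sgnSet
  obtain ⟨d, hd⟩ := Nat.exists_eq_add_of_le this
  rw [hd, Nat.add_sub_cancel_left, show ∀ a b : ℕ, a + b + a = b + 2 * a by intros; ring,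
    pow_add, pow_mul]
  simp

def psi {n : ℕ} (A : Matrix (Fin n) (Fin n) ℝ) (I : Finset (Fin n)) : ℝ := sgnSet I * PfI A I

def moveA {n : ℕ} (a b : Fin n) (t : ℝ) (A : Matrix (Fin n) (Fin n) ℝ) : Matrix (Fin n) (Fin n) ℝ :=
  Matrix.transvection a b (-t) * A * Matrix.transvection b a (-t)

lemma moveA_other {n : ℕ} (a b : Fin n) (t : ℝ) (A : Matrix (Fin n) (Fin n) ℝ) (x y : Fin n)
    (hx : x ≠ a) (hy : y ≠ a) : moveA a b t A x y = A x y := by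
  unfold moveA
  rw [Matrix.mul_transvection_apply_of_ne _ _ _ _ hy, Matrix.transvection_mul_apply_of_ne _ _ _ _ hx]

lemma moveA_row {n : ℕ} (a b : Fin n) (t : ℝ) (A : Matrix (Fin n) (Fin n) ℝ) (y : Fin n)
    (hy : y ≠ a) : moveA a b t A a y = A a y + (-t) * A b y := by
  unfold moveA
  rw [Matrix.mul_transvection_apply_of_ne _ _ _ _ hy, Matrix.transvection_mul_apply_same]

lemma moveA_col {n : ℕ} (a b : Fin n) (t : ℝ) (A : Matrix (Fin n) (Fin n) ℝ) (y : Fin n)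
    (hy : y ≠ a) : moveA a b t A y a = A y a + (-t) * A y b := by
  unfold moveA
  rw [Matrix.mul_transvection_apply_same, Matrix.transvection_mul_apply_of_ne _ _ _ _ hy,
    Matrix.transvection_mul_apply_of_ne _ _ _ _ hy]

lemma psi_move {n : ℕ} (a b : Fin n) (hab : (b : ℕ) = a + 1) (t : ℝ) (A : Matrix (Fin n) (Fin n) ℝ)
    (I : Finset (Fin n)) (hI : Even I.card) :
    psi (moveA a b t A) I = psi A I +
      if a ∈ I ∧ b ∉ I then t * psi A (insert b (I.erase a)) else 0 := by
  have hane : b ≠ a := fun e => by rw [e] at hab; omega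
  set f := I.orderEmbOfFin rfl with hf
  have hfI : ∀ x, f x ∈ I := fun x => Finset.orderEmbOfFin_mem I rfl x
  have hfm : StrictMono f := f.strictMono
  by_cases ha : a ∈ I
  · obtain ⟨k, hk⟩ := hI.two_dvd
    obtain ⟨p, hp⟩ : ∃ p, f p = a := by
      have : a ∈ Set.range f := by rw [hf, Finset.range_orderEmbOfFin]; exact ha
      exact this
    set f' : Fin I.card → Fin n := Function.update f p b with hf'
    have hfne : ∀ x, x ≠ p → f x ≠ a := fun x hx e => hx (f.injective (e.trans hp.symm))
    have lin : pfs hk ((moveA a b t A).submatrix f f) = pfs hk (A.submatrix f f) +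
        (-t) * pfs hk (A.submatrix f' f') := by
      apply pfs_linear hk _ _ _ p
      · intro x y hx hy
        simp only [Matrix.submatrix_apply, hf', Function.update_of_ne hx, Function.update_of_ne hy]
        exact ⟨moveA_other _ _ _ _ _ _ (hfne x hx) (hfne y hy), trivial⟩
      · intro y hy
        simp only [Matrix.submatrix_apply, hf', Function.update_self, Function.update_of_ne hy, hp]
        exact moveA_row _ _ _ _ _ (hfne y hy)
      · intro y hy
        simp only [Matrix.submatrix_apply, hf', Function.update_self, Function.update_of_ne hy, hp]
        exact moveA_col _ _ _ _ _ (hfne y hy)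
    have linP : PfI (moveA a b t A) I = PfI A I + (-t) * Pfaff (A.submatrix f' f') := by
      rw [PfI_eq _ I _ rfl f hfm hfI, PfI_eq _ I _ rfl f hfm hfI, Pfaff_eq hk, Pfaff_eq hk,
        Pfaff_eq hk, lin]
      ring
    by_cases hb : b ∈ I
    · rw [if_neg (fun h => h.2 hb)]
      obtain ⟨q, hq⟩ : ∃ q, f q = b := by
        have : b ∈ Set.range f := by rw [hf, Finset.range_orderEmbOfFin]; exact hb
        exact this
      have hpq : p ≠ q := fun e => hane (by rw [← hq, ← hp, e])
      have hsw : ∀ x, f' (Equiv.swap p q x) = f' x := by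
        intro x
        by_cases h1 : x = p
        · rw [h1, Equiv.swap_apply_left, hf', Function.update_self, Function.update_of_ne hpq.symm, hq]
        · by_cases h2 : x = q
          · rw [h2, Equiv.swap_apply_right, hf', Function.update_self, Function.update_of_ne hpq.symm, hq]
          · rw [Equiv.swap_apply_of_ne_of_ne h1 h2]
      have : pfs hk (A.submatrix f' f') = 0 := by
        apply pfs_alt hk _ p q hpq
        intro x y
        simp only [Matrix.submatrix_apply, hsw]
      rw [Pfaff_eq hk, this] at linP
      unfold psi
      rw [linP]; ring
    · rw [if_pos ⟨ha, hb⟩]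
      have hbe : b ∉ I.erase a := fun h => hb (Finset.mem_of_mem_erase h)
      have hcard : (insert b (I.erase a)).card = I.card := by
        rw [Finset.card_insert_of_notMem hbe, Finset.card_erase_add_one ha]
      have hf'm : StrictMono f' := by
        intro x y hxy
        by_cases h1 : x = p
        · subst h1
          have h2 : y ≠ x := hxy.ne'
          rw [hf', Function.update_self, Function.update_of_ne h2]
          have h3 := hfm hxy
          rw [hp] at h3
          have h4 : f y ≠ b := fun e => hb (e ▸ hfI y)
          have h5 : (f y : ℕ) ≠ b := fun e => h4 (Fin.ext e)
          rw [Fin.lt_def] at h3 ⊢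
          omega
        · by_cases h2 : y = p
          · subst h2
            rw [hf', Function.update_self, Function.update_of_ne h1]
            have h3 := hfm hxy
            rw [hp] at h3
            rw [Fin.lt_def] at h3 ⊢
            omega
          · rw [hf', Function.update_of_ne h1, Function.update_of_ne h2]
            exact hfm hxy
      have hf'I : ∀ x, f' x ∈ insert b (I.erase a) := by
        intro x
        by_cases h1 : x = p
        · rw [h1, hf', Function.update_self]; simp
        · rw [hf', Function.update_of_ne h1]
          exact Finset.mem_insert_of_mem (Finset.mem_erase.2 ⟨hfne x h1, hfI x⟩)
      rw [← PfI_eq A _ _ hcard f' hf'm hf'I] at linP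
      have hs : sgnSet (insert b (I.erase a)) = - sgnSet I := by
        rw [sgnSet_eq, sgnSet_eq, hcard, Finset.sum_insert hbe,
          ← Finset.add_sum_erase I (fun i => (i : ℕ) + 1) ha, hab]
        ring
      unfold psi
      rw [linP, hs]; ring
  · rw [if_neg (fun h => ha h.1), add_zero]
    unfold psi
    congr 1
    rw [PfI_eq _ I _ rfl f hfm hfI, PfI_eq _ I _ rfl f hfm hfI]
    congr 1
    ext x y
    exact moveA_other _ _ _ _ _ _ (fun e => ha (e ▸ hfI x)) (fun e => ha (e ▸ hfI y))

def addA {n : ℕ} (a b : Fin n) (t : ℝ) (A : Matrix (Fin n) (Fin n) ℝ) : Matrix (Fin n) (Fin n) ℝ :=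
  A + (Matrix.single a b t + Matrix.single b a (-t))

lemma psi_add {n : ℕ} (a b : Fin n) (ha : (a : ℕ) + 2 = n) (hb : (b : ℕ) + 1 = n) (t : ℝ)
    (A : Matrix (Fin n) (Fin n) ℝ) (I : Finset (Fin n)) (hI : Even I.card) :
    psi (addA a b t A) I = psi A I +
      if a ∈ I ∧ b ∈ I then t * psi A ((I.erase b).erase a) else 0 := by
  have hane : b ≠ a := fun e => by rw [e] at hb; omega
  by_cases hab : a ∈ I ∧ b ∈ I
  · rw [if_pos hab]
    set J := (I.erase b).erase a with hJ
    have hca : a ∈ I.erase b := Finset.mem_erase.2 ⟨hane.symm, hab.1⟩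
    have hc1 : J.card + 1 = (I.erase b).card := Finset.card_erase_add_one hca
    have hc2 : (I.erase b).card + 1 = I.card := Finset.card_erase_add_one hab.2
    obtain ⟨k, hk⟩ : ∃ k, J.card = 2 * k := by
      obtain ⟨r, hr⟩ := hI.two_dvd
      exact ⟨r - 1, by omega⟩
    have hIc : I.card = 2 * (k + 1) := by omega
    set g := J.orderEmbOfFin hk with hg
    have hgJ : ∀ x, g x ∈ J := fun x => Finset.orderEmbOfFin_mem J hk x
    have hgI : ∀ x, g x ∈ I := fun x => Finset.mem_of_mem_erase (Finset.mem_of_mem_erase (hgJ x))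
    have hga : ∀ x, g x < a := by
      intro x
      have h1 : g x ≠ a := Finset.ne_of_mem_erase (hgJ x)
      have h2 : g x ≠ b := Finset.ne_of_mem_erase (Finset.mem_of_mem_erase (hgJ x))
      have h3 : (g x : ℕ) ≠ a := fun e => h1 (Fin.ext e)
      have h4 : (g x : ℕ) ≠ b := fun e => h2 (Fin.ext e)
      have := (g x).isLt
      rw [Fin.lt_def]; omega
    have hlt : a < b := by rw [Fin.lt_def]; omega
    set f : Fin (2 * (k + 1)) → Fin n := fun x => if h : (x : ℕ) < 2 * k then g ⟨x, h⟩ else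
      if (x : ℕ) = 2 * k then a else b with hf
    have hfm : StrictMono f := by
      intro x y hxy
      rw [Fin.lt_def] at hxy
      have := y.isLt
      simp only [hf]
      by_cases hy : (y : ℕ) < 2 * k
      · rw [dif_pos hy, dif_pos (by omega)]
        exact g.strictMono (by rw [Fin.lt_def]; exact hxy)
      · rw [dif_neg hy]
        by_cases hx : (x : ℕ) < 2 * k
        · rw [dif_pos hx]
          split_ifs
          · exact hga _
          · exact (hga _).trans hlt
        · rw [dif_neg hx, if_pos (by omega), if_neg (by omega)]
          exact hlt
    have hfI : ∀ x, f x ∈ I := by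
      intro x
      simp only [hf]
      split_ifs
      · exact hgI _
      · exact hab.1
      · exact hab.2
    set U : Fin (2 * (k + 1)) := ⟨2 * k, by omega⟩ with hU
    set V : Fin (2 * (k + 1)) := ⟨2 * k + 1, by omega⟩ with hV
    have hfU : f U = a := by simp [hf, hU]
    have hfV : f V = b := by simp [hf, hV]
    have key := Pfaff_pair (A.submatrix f f)
      ((Matrix.single a b t + Matrix.single b a (-t)).submatrix f f) t U V rfl rfl
      (by simp [hfU, hfV, hane])
      (by simp [hfU, hfV, hane])
      (by
        intro x y h1 h2
        have e1 : ¬ (a = f x ∧ b = f y) := fun e => h1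
          ⟨hfm.injective (e.1.symm.trans hfU.symm), hfm.injective (e.2.symm.trans hfV.symm)⟩
        have e2 : ¬ (b = f x ∧ a = f y) := fun e => h2
          ⟨hfm.injective (e.1.symm.trans hfV.symm), hfm.injective (e.2.symm.trans hfU.symm)⟩
        simp only [Matrix.submatrix_apply, Matrix.add_apply, Matrix.single_apply, if_neg e1, if_neg e2,
          add_zero])
    have hfg : ∀ x : Fin (2 * k), f (Fin.castLE (by omega) x) = g x := by
      intro x; simp [hf]
    have hP : PfI (addA a b t A) I = PfI A I + t * PfI A J := by
      rw [PfI_eq _ I _ hIc f hfm hfI, PfI_eq _ I _ hIc f hfm hfI,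
        PfI_eq _ J _ hk g g.strictMono hgJ]
      refine Eq.trans ?_ (key.trans ?_)
      · rfl
      · congr 3
        ext x y
        simp only [Matrix.submatrix_apply, hfg]
    have hs : sgnSet I = sgnSet J := by
      rw [sgnSet_eq, sgnSet_eq, hIc, hk, ← Finset.add_sum_erase I (fun i => (i : ℕ) + 1) hab.2,
        ← Finset.add_sum_erase (I.erase b) (fun i => (i : ℕ) + 1) hca, ← hJ]
      have e1 : 2 * (k + 1) * (2 * (k + 1) + 1) / 2 = (k + 1) * (2 * (k + 1) + 1) := by
        rw [mul_assoc, Nat.mul_div_cancel_left _ (by norm_num)]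
      have e2 : 2 * k * (2 * k + 1) / 2 = k * (2 * k + 1) := by
        rw [mul_assoc, Nat.mul_div_cancel_left _ (by norm_num)]
      rw [e1, e2]
      have : (b : ℕ) + 1 + ((a : ℕ) + 1 + ∑ i ∈ J, ((i : ℕ) + 1)) + (k + 1) * (2 * (k + 1) + 1)
        = (∑ i ∈ J, ((i : ℕ) + 1) + k * (2 * k + 1)) + 2 * (a + 2 * k + 3) := by
        have : (b : ℕ) = a + 1 := by omega
        rw [this]; ring
      rw [this, pow_add _ _ (2 * _), pow_mul]
      simp
    unfold psi
    rw [hP, hs]; ring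
  · rw [if_neg hab, add_zero]
    unfold psi
    congr 1
    set f := I.orderEmbOfFin rfl with hf
    have hfI : ∀ x, f x ∈ I := fun x => Finset.orderEmbOfFin_mem I rfl x
    rw [PfI_eq _ I _ rfl f f.strictMono hfI, PfI_eq _ I _ rfl f f.strictMono hfI]
    congr 1
    ext x y
    have e1 : ¬ (a = f x ∧ b = f y) := fun e => hab ⟨e.1 ▸ hfI x, e.2 ▸ hfI y⟩
    have e2 : ¬ (b = f x ∧ a = f y) := fun e => hab ⟨e.2 ▸ hfI y, e.1 ▸ hfI x⟩
    simp only [addA, Matrix.submatrix_apply, Matrix.add_apply, Matrix.single_apply, if_neg e1, if_neg e2,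
          add_zero]

lemma psi_zero_empty {n : ℕ} (A : Matrix (Fin n) (Fin n) ℝ) : psi A ∅ = 1 := by
  unfold psi
  rw [PfI_eq A ∅ 0 rfl (fun x => x.elim0) (fun x => x.elim0) (fun x => x.elim0)]
  rw [Pfaff_eq (k := 0) rfl]
  simp [sgnSet, pfs]

lemma psi_zero {n : ℕ} (I : Finset (Fin n)) (hI : Even I.card) :
    0 ≤ psi (0 : Matrix (Fin n) (Fin n) ℝ) I := by
  by_cases h : I = ∅
  · rw [h, psi_zero_empty]; norm_num
  · obtain ⟨k, hk⟩ := hI.two_dvd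
    have hc := Finset.card_pos.2 (Finset.nonempty_iff_ne_empty.2 h)
    have : psi (0 : Matrix (Fin n) (Fin n) ℝ) I = 0 := by
      unfold psi PfI
      rw [Pfaff_eq hk]
      have : k ≠ 0 := by omega
      simp [pfs, this]
    rw [this]

def stepA {n : ℕ} (hn : 2 ≤ n) (A : Matrix (Fin n) (Fin n) ℝ) (x : ℕ × ℝ) : Matrix (Fin n) (Fin n) ℝ :=
  if h : 1 ≤ x.1 ∧ x.1 < n then moveA ⟨x.1 - 1, by omega⟩ ⟨x.1, h.2⟩ x.2 A
  else addA ⟨n - 2, by omega⟩ ⟨n - 1, by omega⟩ x.2 A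

def StepS {n : ℕ} (hn : 2 ≤ n) (i : ℕ) (J J' : Finset (Fin n)) : Prop :=
  J' = J ∨
  (∃ h : 1 ≤ i ∧ i < n, (⟨i, h.2⟩ : Fin n) ∈ J ∧ (⟨i - 1, by omega⟩ : Fin n) ∉ J ∧
    J' = insert (⟨i - 1, by omega⟩ : Fin n) (J.erase ⟨i, h.2⟩)) ∨
  (¬ (1 ≤ i ∧ i < n) ∧ (⟨n - 2, by omega⟩ : Fin n) ∉ J ∧ (⟨n - 1, by omega⟩ : Fin n) ∉ J ∧
    J' = insert (⟨n - 1, by omega⟩ : Fin n) (insert (⟨n - 2, by omega⟩ : Fin n) J))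

def Reach {n : ℕ} (hn : 2 ≤ n) : List ℕ → Finset (Fin n) → Finset (Fin n) → Prop
  | [], J, J' => J' = J
  | i :: w, J, J' => ∃ K, StepS hn i J K ∧ Reach hn w K J'

lemma Reach.rfl' {n : ℕ} (hn : 2 ≤ n) (w : List ℕ) (J : Finset (Fin n)) : Reach hn w J J := by
  induction w with
  | nil => rfl
  | cons i w ih => exact ⟨J, Or.inl rfl, ih⟩

lemma Reach.append {n : ℕ} (hn : 2 ≤ n) (w w' : List ℕ) (J K L : Finset (Fin n))
    (h : Reach hn w J K) (h' : Reach hn w' K L) : Reach hn (w ++ w') J L := by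
  induction w generalizing J with
  | nil => cases h; exact h'
  | cons i w ih =>
    obtain ⟨K', h1, h2⟩ := h
    exact ⟨K', h1, ih _ h2⟩

def NN {n : ℕ} (A : Matrix (Fin n) (Fin n) ℝ) : Prop :=
  ∀ I : Finset (Fin n), Even I.card → 0 ≤ psi A I

lemma stepA_ge {n : ℕ} (hn : 2 ≤ n) (A : Matrix (Fin n) (Fin n) ℝ) (x : ℕ × ℝ) (hx : 0 < x.2)
    (hA : NN A) (I : Finset (Fin n)) (hI : Even I.card) : psi A I ≤ psi (stepA hn A x) I := by
  unfold stepA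
  split_ifs with h
  · rw [psi_move _ _ (by simp; omega) _ _ _ hI]
    split_ifs with h2
    · have : Even (insert (⟨x.1, h.2⟩ : Fin n) (I.erase ⟨x.1 - 1, by omega⟩)).card := by
        rw [Finset.card_insert_of_notMem (fun h => h2.2 (Finset.mem_of_mem_erase h)),
          Finset.card_erase_add_one h2.1]
        exact hI
      have := mul_nonneg hx.le (hA _ this)
      linarith
    · simp
  · rw [psi_add _ _ (by simp; omega) (by simp; omega) _ _ _ hI]
    split_ifs with h2
    · have : Even (((I.erase ⟨n - 1, by omega⟩).erase (⟨n - 2, by omega⟩ : Fin n)).card) := by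
        have hc1 := Finset.card_erase_add_one h2.2
        have hc2 := Finset.card_erase_add_one (Finset.mem_erase.2 ⟨(by simp; omega :
          (⟨n - 2, by omega⟩ : Fin n) ≠ ⟨n - 1, by omega⟩), h2.1⟩)
        rw [Nat.even_iff] at hI ⊢
        omega
      have := mul_nonneg hx.le (hA _ this)
      linarith
    · simp

lemma stepA_pos {n : ℕ} (hn : 2 ≤ n) (A : Matrix (Fin n) (Fin n) ℝ) (x : ℕ × ℝ) (hx : 0 < x.2)
    (hA : NN A) (J J' : Finset (Fin n)) (hJ : Even J.card) (hS : StepS hn x.1 J J')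
    (hp : 0 < psi A J) : Even J'.card ∧ 0 < psi (stepA hn A x) J' := by
  rcases hS with h | ⟨h, h1, h2, h3⟩ | ⟨h, h1, h2, h3⟩
  · subst h
    exact ⟨hJ, hp.trans_le (stepA_ge hn A x hx hA _ hJ)⟩
  · have hJ' : Even J'.card := by
      rw [h3, Finset.card_insert_of_notMem (fun h => h2 (Finset.mem_of_mem_erase h)),
          Finset.card_erase_add_one h1]
      exact hJ
    refine ⟨hJ', ?_⟩
    have hne : (⟨x.1, h.2⟩ : Fin n) ≠ ⟨x.1 - 1, by omega⟩ := by simp; omega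
    unfold stepA
    rw [dif_pos h, psi_move _ _ (by simp; omega) _ _ _ hJ', if_pos]
    · have e : insert (⟨x.1, h.2⟩ : Fin n) (J'.erase ⟨x.1 - 1, by omega⟩) = J := by
        rw [h3, Finset.erase_insert (fun h => h2 (Finset.mem_of_mem_erase h)), Finset.insert_erase h1]
      rw [e]
      have := mul_pos hx hp
      have := hA _ hJ'
      linarith
    · rw [h3]
      refine ⟨Finset.mem_insert_self _ _, ?_⟩
      simp [hne]
  · have hne : (⟨n - 1, by omega⟩ : Fin n) ≠ ⟨n - 2, by omega⟩ := by simp; omega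
    have hn1 : (⟨n - 1, by omega⟩ : Fin n) ∉ insert (⟨n - 2, by omega⟩ : Fin n) J := by
      rw [Finset.mem_insert]; exact fun e => e.elim hne h2
    have hJ' : Even J'.card := by
      rw [h3, Finset.card_insert_of_notMem hn1, Finset.card_insert_of_notMem h1]
      rw [Nat.even_iff] at hJ ⊢
      omega
    refine ⟨hJ', ?_⟩
    unfold stepA
    rw [dif_neg h, psi_add _ _ (by simp; omega) (by simp; omega) _ _ _ hJ', if_pos]
    · rw [h3, Finset.erase_insert hn1, Finset.erase_insert h1, ← h3]
      have := mul_pos hx hp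
      have := hA _ hJ'
      linarith
    · rw [h3]; simp

lemma foldl_pos {n : ℕ} (hn : 2 ≤ n) (L : List (ℕ × ℝ)) (hL : ∀ x ∈ L, 0 < x.2)
    (A : Matrix (Fin n) (Fin n) ℝ) (hA : NN A) (J J' : Finset (Fin n)) (hJ : Even J.card)
    (hp : 0 < psi A J) (hR : Reach hn (L.map Prod.fst) J J') : 0 < psi (L.foldl (stepA hn) A) J' := by
  induction L generalizing A J with
  | nil => cases hR; exact hp
  | cons x L ih =>
    obtain ⟨K, h1, h2⟩ := hR
    have hx := hL x (by simp)
    have := stepA_pos hn A x hx hA J K hJ h1 hp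
    exact ih (fun y hy => hL y (by simp [hy])) _
      (fun I hI => (hA I hI).trans (stepA_ge hn A x hx hA I hI)) K this.1 this.2 h2

lemma decRun_cons (c d : ℕ) (h : d ≤ c) (hd : 1 ≤ d) : decRun c d = c :: decRun (c - 1) d := by
  unfold decRun
  have : c + 1 - d = (c - 1 + 1 - d) + 1 := by omega
  rw [this, List.range'_concat, List.reverse_append]
  simp
  omega

lemma decRun_length (c d : ℕ) : (decRun c d).length = c + 1 - d := by simp [decRun]

lemma reach_run {n : ℕ} (hn : 2 ≤ n) (c d : ℕ) (hc : c < n) (a : Fin n) (hd : 1 ≤ d) (hda : d ≤ a + 1)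
    (hac : (a : ℕ) ≤ c) (K : Finset (Fin n)) (hK : ∀ x ∈ K, (x : ℕ) < a ∨ c < x) :
    Reach hn (decRun c d) (insert ⟨c, hc⟩ K) (insert a K) := by
  induction c with
  | zero =>
    have : a = ⟨0, hc⟩ := Fin.ext (by simpa using hac)
    rw [this]; exact Reach.rfl' hn _ _
  | succ c ih =>
    by_cases h : (a : ℕ) = c + 1
    · have : a = ⟨c + 1, hc⟩ := Fin.ext h
      rw [this]; exact Reach.rfl' hn _ _
    · rw [decRun_cons _ _ (by omega) hd]
      have hcK : (⟨c + 1, hc⟩ : Fin n) ∉ K := fun hx => by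
        have := hK _ hx
        simp only at this
        omega
      have hcK' : (⟨c, by omega⟩ : Fin n) ∉ K := fun hx => by
        have := hK _ hx
        simp only at this
        omega
      refine ⟨insert ⟨c, by omega⟩ K, Or.inr (Or.inl ⟨⟨by omega, hc⟩, by simp, ?_, ?_⟩), ?_⟩
      · simp [hcK']
      · rw [Finset.erase_insert hcK]; rfl
      · refine ih (by omega) (by omega) ?_
        intro x hx
        have h1 := hK x hx
        omega

def blockD (n m : ℕ) : List ℕ :=
  n :: (decRun (n - 2) (2 * m + 1) ++ decRun (n - 1) (2 * m + 2))

lemma reach_blocks {n : ℕ} (hn : 2 ≤ n) (M : ℕ) (I : Finset (Fin n)) (hI : Even I.card)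
    (hc : I.card ≤ 2 * M) : Reach hn ((List.range M).map (blockD n)).flatten ∅ I := by
  induction M generalizing I with
  | zero =>
    have : I = ∅ := Finset.card_eq_zero.1 (by omega)
    rw [this]; exact Reach.rfl' hn _ _
  | succ M ih =>
    rw [List.range_succ, List.map_append, List.flatten_append]
    by_cases h : I.card ≤ 2 * M
    · exact Reach.append hn _ _ _ _ _ (ih I hI h) (Reach.rfl' hn _ _)
    · have hcard : I.card = 2 * M + 2 := by
        rw [Nat.even_iff] at hI; omega
      have hne : I.Nonempty := Finset.card_pos.1 (by omega)
      set b := I.max' hne with hb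
      have hbI : b ∈ I := Finset.max'_mem _ _
      have hc1 := Finset.card_erase_add_one hbI
      have hne' : (I.erase b).Nonempty := Finset.card_pos.1 (by omega)
      set a := (I.erase b).max' hne' with ha
      have haI : a ∈ I.erase b := Finset.max'_mem _ _
      have hc2 := Finset.card_erase_add_one haI
      set J := (I.erase b).erase a with hJ
      have hJa : ∀ x ∈ J, x < a := fun x hx => lt_of_le_of_ne
        (Finset.le_max' _ _ (Finset.mem_of_mem_erase hx)) (Finset.ne_of_mem_erase hx)
      have hab : a < b := lt_of_le_of_ne
        (Finset.le_max' _ _ (Finset.mem_of_mem_erase haI)) (Finset.ne_of_mem_erase haI)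
      have hJc : J.card ≤ a := by
        have : J ⊆ Finset.Iio a := fun x hx => Finset.mem_Iio.2 (hJa x hx)
        have := Finset.card_le_card this
        simpa using this
      have hJcard : J.card = 2 * M := by omega
      have hIe : I = insert b (insert a J) := by
        rw [hJ, Finset.insert_erase haI, Finset.insert_erase hbI]
      rw [Fin.lt_def] at hab
      have hbn := b.isLt
      have hJa' : ∀ x ∈ J, (x : ℕ) < a := fun x hx => Fin.lt_def.1 (hJa x hx)
      refine Reach.append hn _ _ _ J _ (ih J (by rw [hJcard]; simp) hJcard.le) ?_
      have e : (List.map (blockD n) [M]).flatten = blockD n M := by simp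
      rw [e]
      refine ⟨insert ⟨n - 1, by omega⟩ (insert ⟨n - 2, by omega⟩ J),
        Or.inr (Or.inr ⟨by omega, ?_, ?_, rfl⟩), ?_⟩
      · intro hx; have := hJa' _ hx; simp only at this; omega
      · intro hx; have := hJa' _ hx; simp only at this; omega
      · refine Reach.append hn _ _ _ (insert ⟨n - 1, by omega⟩ (insert a J)) _ ?_ ?_
        · rw [Finset.insert_comm, Finset.insert_comm _ a]
          refine reach_run hn (n - 2) _ (by omega) a (by omega) (by omega) (by omega) _ ?_
          intro x hx
          rcases Finset.mem_insert.1 hx with e | hx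
          · right; rw [e]; simp only; omega
          · left; exact hJa' x hx
        · refine Eq.subst (motive := fun S => Reach hn _ _ S) hIe.symm ?_
          refine reach_run hn (n - 1) _ (by omega) b (by omega) (by omega) (by omega) _ ?_
          intro x hx
          left
          rcases Finset.mem_insert.1 hx with e | hx
          · rw [e]; exact hab
          · have := hJa' x hx; omega

lemma reach_word {n : ℕ} (hn : 2 ≤ n) (I : Finset (Fin n)) (hI : Even I.card) :
    Reach hn (wordD n) ∅ I := by
  refine reach_blocks hn (n / 2) I hI ?_
  have := Finset.card_le_univ I
  rw [Fintype.card_fin] at this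
  rw [Nat.even_iff] at hI
  omega

lemma blocks_length (n M : ℕ) (hM : 2 * M ≤ n) :
    (((List.range M).map (blockD n)).flatten.length : ℤ) = M * (2 * n - 1 - 2 * M) := by
  induction M with
  | zero => simp
  | succ M ih =>
    rw [List.range_succ, List.map_append, List.flatten_append, List.length_append]
    push_cast
    rw [ih (by omega)]
    have : ((List.map (blockD n) [M]).flatten.length : ℤ) = 2 * n - 4 * M - 3 := by
      simp only [List.map_cons, List.map_nil, List.flatten_cons, List.flatten_nil, List.append_nil,
        blockD, List.length_cons, List.length_append, decRun_length]
      omega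
    rw [this]; ring

lemma wordD_length (n : ℕ) (hn : 2 ≤ n) : (wordD n).length = Npar n := by
  have h := blocks_length n (n / 2) (by omega)
  change ((wordD n).length : ℤ) = _ at h
  unfold Npar
  obtain ⟨k, hk⟩ := Nat.even_or_odd' n
  generalize (wordD n).length = l at h
  rcases hk with rfl | rfl
  · have e : 2 * k / 2 = k := by omega
    rw [e] at h
    rw [mul_assoc, Nat.mul_div_cancel_left _ (by norm_num)]
    zify
    rw [Nat.cast_sub (by omega), h]; push_cast; ring
  · have e : (2 * k + 1) / 2 = k := by omega
    rw [e] at h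
    rw [Nat.add_sub_cancel, mul_comm, mul_assoc, Nat.mul_div_cancel_left _ (by norm_num)]
    zify
    rw [h]; push_cast; ring

lemma wordD_pos (n : ℕ) (hn : 2 ≤ n) (i : ℕ) (hi : i ∈ wordD n) : 1 ≤ i := by
  unfold wordD at hi
  simp [decRun] at hi
  obtain ⟨m, _, h⟩ := hi
  omega

def e1 {n : ℕ} (q : Fin n) : Fin (2 * n) := ⟨(q : ℕ), by have := q.isLt; omega⟩
def e2 {n : ℕ} (q : Fin n) : Fin (2 * n) := ⟨n + (q : ℕ), by have := q.isLt; omega⟩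

def BInv {n : ℕ} (P : Matrix (Fin (2 * n)) (Fin (2 * n)) ℝ) (A : Matrix (Fin n) (Fin n) ℝ) : Prop :=
  IsUnit (P.submatrix (e1 (n := n)) e1).det ∧ P.submatrix (e1 (n := n)) e2 = P.submatrix (e1 (n := n)) e1 * A

lemma mul_single_ap {m : ℕ} (P : Matrix (Fin m) (Fin m) ℝ) (i j x y : Fin m) (c : ℝ) :
    (P * Matrix.single i j c) x y = if y = j then P x i * c else 0 := by
  split_ifs with h
  · rw [h]; simp
  · simp [h]

lemma Inv_step {n : ℕ} (hn : 2 ≤ n) (P : Matrix (Fin (2 * n)) (Fin (2 * n)) ℝ)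
    (A : Matrix (Fin n) (Fin n) ℝ) (x : ℕ × ℝ) (hx : 1 ≤ x.1) (h : BInv P A) :
    BInv (P * xMat n x.1 x.2) (stepA hn A x) := by
  obtain ⟨i, t⟩ := x
  obtain ⟨hd, hA⟩ := h
  simp only at hx
  set U := P.submatrix (e1 (n := n)) e1 with hU
  unfold stepA
  by_cases hi : i < n
  · rw [dif_pos ⟨hx, hi⟩]
    simp only
    set a : Fin n := ⟨i - 1, by omega⟩ with ha
    set b : Fin n := ⟨i, hi⟩ with hb
    have hX : xMat n i t = 1 + Matrix.single (e1 a) (e1 b) t + Matrix.single (e2 b) (e2 a) (-t) := by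
      ext p q
      simp only [xMat, Matrix.of_apply, if_pos hi, Matrix.add_apply, Matrix.single_apply, Matrix.one_apply,
        Fin.ext_iff, e1, e2, ha, hb, ← add_assoc]
      congr 1
      · congr 1
        exact if_congr (by omega) rfl rfl
      · exact if_congr (by omega) rfl rfl
    have h1 : (P * xMat n i t).submatrix (e1 (n := n)) e1 = U * Matrix.transvection a b t := by
      ext p q
      rw [hX, mul_add, mul_add, mul_one, Matrix.transvection, mul_add, mul_one]
      have hq := q.isLt
      have : e1 q ≠ e2 a := by simp only [e1, e2, ne_eq, Fin.ext_iff]; omega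
      simp only [Matrix.submatrix_apply, Matrix.add_apply, mul_single_ap, hU, if_neg this, add_zero]
      simp [e1, Fin.ext_iff]
    have h2 : (P * xMat n i t).submatrix (e1 (n := n)) e2 =
        P.submatrix (e1 (n := n)) e2 * Matrix.transvection b a (-t) := by
      ext p q
      rw [hX, mul_add, mul_add, mul_one, Matrix.transvection, mul_add, mul_one]
      have hb := b.isLt
      have : e2 q ≠ e1 b := by simp only [e1, e2, ne_eq, Fin.ext_iff]; omega
      simp only [Matrix.submatrix_apply, Matrix.add_apply, mul_single_ap, if_neg this, add_zero]
      simp [e2, Fin.ext_iff]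
    have hab : a ≠ b := by simp only [ha, hb, ne_eq, Fin.ext_iff]; omega
    refine ⟨?_, ?_⟩
    · rw [h1, Matrix.det_mul, Matrix.det_transvection_of_ne _ _ hab, mul_one]; exact hd
    · rw [h1, h2, hA, moveA, ← mul_assoc, ← mul_assoc, mul_assoc U (Matrix.transvection a b t),
        Matrix.transvection_mul_transvection_same _ _ hab]
      simp
  · rw [dif_neg (by simp only; omega)]
    simp only
    set a : Fin n := ⟨n - 2, by omega⟩ with ha
    set b : Fin n := ⟨n - 1, by omega⟩ with hb
    have hX : xMat n i t = 1 + Matrix.single (e1 a) (e2 b) t + Matrix.single (e1 b) (e2 a) (-t) := by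
      ext p q
      simp only [xMat, Matrix.of_apply, if_neg hi, Matrix.add_apply, Matrix.single_apply, Matrix.one_apply,
        Fin.ext_iff, e1, e2, ha, hb, ← add_assoc]
      congr 1
      · congr 1
        exact if_congr (by omega) rfl rfl
      · exact if_congr (by omega) rfl rfl
    have h1 : (P * xMat n i t).submatrix (e1 (n := n)) e1 = U := by
      ext p q
      rw [hX, mul_add, mul_add, mul_one]
      have hq := q.isLt
      have h3 : ∀ c : Fin n, e1 q ≠ e2 c := by intro c; simp only [e1, e2, ne_eq, Fin.ext_iff]; omega
      simp only [Matrix.submatrix_apply, Matrix.add_apply, mul_single_ap, hU, if_neg (h3 _), add_zero]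
    have h2 : (P * xMat n i t).submatrix (e1 (n := n)) e2 =
        P.submatrix (e1 (n := n)) e2 + U * (Matrix.single a b t + Matrix.single b a (-t)) := by
      ext p q
      rw [hX, mul_add, mul_add, mul_one, mul_add]
      simp only [Matrix.submatrix_apply, Matrix.add_apply, mul_single_ap, hU]
      simp [e2, Fin.ext_iff, add_assoc]
    refine ⟨?_, ?_⟩
    · rw [h1]; exact hd
    · rw [h1, h2, hA, addA, mul_add U A]

lemma Inv_fold {n : ℕ} (hn : 2 ≤ n) (L : List (ℕ × ℝ)) (hL : ∀ x ∈ L, 1 ≤ x.1)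
    (P : Matrix (Fin (2 * n)) (Fin (2 * n)) ℝ)
    (A : Matrix (Fin n) (Fin n) ℝ) (h : BInv P A) :
    BInv (P * (L.map (fun x => xMat n x.1 x.2)).prod) (L.foldl (stepA hn) A) := by
  induction L generalizing P A with
  | nil => simpa using h
  | cons x L ih =>
    rw [List.map_cons, List.prod_cons, ← mul_assoc, List.foldl_cons]
    exact ih (fun y hy => hL y (by simp [hy])) _ _ (Inv_step hn P A x (hL x (by simp)) h)

lemma Inv_one {n : ℕ} : BInv (1 : Matrix (Fin (2 * n)) (Fin (2 * n)) ℝ) (0 : Matrix (Fin n) (Fin n) ℝ) := by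
  have h1 : (1 : Matrix (Fin (2 * n)) (Fin (2 * n)) ℝ).submatrix (e1 (n := n)) e1 = 1 :=
    Matrix.submatrix_one _ (fun x y h => by simpa [e1, Fin.ext_iff] using h)
  refine ⟨by rw [h1]; simp, ?_⟩
  rw [mul_zero]
  ext p q
  have := p.isLt
  rw [Matrix.submatrix_apply, Matrix.one_apply_ne]
  · rfl
  · simp only [e1, e2, ne_eq, Fin.ext_iff]; omega

/-- For `A ∈ S_n^{>0}` and `I ⊆ {1,…,n}` of even size,
`sgn(I,[n]) · Pf_I(A) > 0`. -/
theorem pfaffian_sign_of_totally_positive (n : ℕ) (hn : 2 ≤ n)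
    (A : Matrix (Fin n) (Fin n) ℝ) (hA : A ∈ Spos n)
    (I : Finset (Fin n)) (hI : Even I.card) :
    0 < sgnSet I * PfI A I := by
  obtain ⟨t, ht, rfl⟩ := hA
  set L : List (ℕ × ℝ) := (List.range (Npar n)).map (fun l => ((wordD n).getD l 0, t l)) with hL
  have hfst : L.map Prod.fst = wordD n := by
    rw [hL, List.map_map]
    apply List.ext_getElem
    · simp [wordD_length n hn]
    · intro i h1 h2
      simp [List.getElem?_eq_getElem h2]
  have hInv := Inv_fold hn L (fun x hx => wordD_pos n hn _ (by
    rw [← hfst]; exact List.mem_map_of_mem hx)) 1 0 Inv_one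
  have hprod : (L.map (fun x => xMat n x.1 x.2)).prod = prodX n t := by
    rw [hL, List.map_map]; rfl
  rw [one_mul, hprod] at hInv
  have hAm : Amat n t = L.foldl (stepA hn) 0 := by
    obtain ⟨hd, he⟩ := hInv
    change IsUnit (X1 n t).det at hd
    change X2 n t = X1 n t * _ at he
    rw [Amat, he, Matrix.nonsing_inv_mul_cancel_left _ _ hd]
  have := foldl_pos hn L (by
    intro x hx
    rw [hL, List.mem_map] at hx
    obtain ⟨l, hl, rfl⟩ := hx
    exact ht l (List.mem_range.1 hl)) 0 (fun I hI => psi_zero I hI) ∅ I (by simp)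
    (by rw [psi_zero_empty]; norm_num) (by rw [hfst]; exact reach_word hn I hI)
  rw [← hAm] at this
  exact this
end
end

section
/- For all integers 1 ≤ j ≤ k ≤ n−1 there exists a vector of natural number exponents d = (d_1,…,d_N) (depending only on n, j and k) such that for every t = (t_1,…,t_N) ∈ ℝ^N one has M_{j,k}(A(t)) = ∏_{i=1}^N t_i^{d_i}. In particular, each M_{j,k}(A(t)) is a monomial in t_1,…,t_N with coefficient 1. -/
noncomputable section

open Matrix

set_option linter.unusedVariables false

def MonoF (N : ℕ) (f : (ℕ → ℝ) → ℝ) : Prop :=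
  ∃ d : ℕ → ℕ, ∀ t : ℕ → ℝ, f t = ∏ i ∈ Finset.range N, t i ^ d i

lemma MonoF.one (N : ℕ) : MonoF N (fun _ => 1) := ⟨fun _ => 0, fun t => by simp⟩

lemma MonoF.mul {N : ℕ} {f g : (ℕ → ℝ) → ℝ} (hf : MonoF N f) (hg : MonoF N g) :
    MonoF N (fun t => f t * g t) := by
  obtain ⟨d, hd⟩ := hf
  obtain ⟨e, he⟩ := hg
  refine ⟨fun i => d i + e i, fun t => ?_⟩
  beta_reduce
  rw [hd, he, ← Finset.prod_mul_distrib]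
  simp [pow_add]

lemma MonoF.var {N i : ℕ} (h : i < N) : MonoF N (fun t => t i) := by
  refine ⟨fun k => if k = i then 1 else 0, fun t => ?_⟩
  rw [Finset.prod_eq_single i]
  · simp
  · intro b _ hb; simp [hb]
  · intro h'; simp at h'; omega

lemma MonoF.shift {N : ℕ} {f : (ℕ → ℝ) → ℝ} (k : ℕ) (hf : MonoF N f) :
    MonoF (k + N) (fun t => f (fun l => t (k + l))) := by
  obtain ⟨d, hd⟩ := hf
  refine ⟨fun i => if i < k then 0 else d (i - k), fun t => ?_⟩
  beta_reduce
  rw [hd, Finset.prod_range_add]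
  have : ∏ x ∈ Finset.range k, t x ^ (if x < k then 0 else d (x - k)) = 1 := by
    apply Finset.prod_eq_one
    intro x hx
    simp [Finset.mem_range.1 hx]
  rw [this, one_mul]
  apply Finset.prod_congr rfl
  intro x _
  simp

lemma MonoF.prod {N : ℕ} (M : ℕ) (f : ℕ → (ℕ → ℝ) → ℝ) (h : ∀ i < M, MonoF N (f i)) :
    MonoF N (fun t => ∏ i ∈ Finset.range M, f i t) := by
  induction M with
  | zero => simpa using MonoF.one N
  | succ M ih =>
    simp only [Finset.prod_range_succ]
    exact (ih fun i hi => h i (by omega)).mul (h M (by omega))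

/-- determinant of the leading `N × N` part of an array. -/
def dt (N : ℕ) (F : ℕ → ℕ → ℝ) : ℝ :=
  Matrix.det (Matrix.of fun (i c : Fin N) => F i c)

lemma dt_congr {N : ℕ} {F G : ℕ → ℕ → ℝ} (h : ∀ i c, i < N → c < N → F i c = G i c) :
    dt N F = dt N G := by
  unfold dt
  congr 1
  ext i c
  exact h i c i.2 c.2

lemma dt_expand (N p : ℕ) (hp : p ≤ N) (F : ℕ → ℕ → ℝ) (h : ∀ i < N, F i p = 0) :
    dt (N + 1) F = (-1) ^ (N + p) * F N p * dt N (fun i c => F i (if c < p then c else c + 1)) := by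
  unfold dt
  rw [Matrix.det_succ_column _ (⟨p, by omega⟩ : Fin (N + 1)), Finset.sum_eq_single (Fin.last N)]
  · simp only [Matrix.of_apply, Fin.val_last]
    congr 2
    ext i c
    simp only [Matrix.submatrix_apply, Matrix.of_apply, Fin.succAbove_last, Fin.val_castSucc]
    congr 1
    simp only [Fin.succAbove, Fin.lt_def, Fin.val_castSucc]
    split_ifs <;> simp
  · intro b _ hb
    have : (b : ℕ) < N := by
      have := b.2
      have : (b : ℕ) ≠ N := fun h => hb (Fin.ext h)
      omega
    simp [h b this]
  · simp

def cF (j s : ℕ) (b u : ℕ → ℕ → ℝ) (i c : ℕ) : ℝ :=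
  if c < s then b i c else if c < s + j then u i (c - s) else b i (c - j)

lemma dt_cF_zero (j : ℕ) (u : ℕ → ℕ → ℝ) (q : ℕ) : ∀ (b : ℕ → ℕ → ℝ) (c : ℕ → ℝ),
    (∀ i m, m < q → i + m + 1 < j + q → b i m = 0) →
    (∀ i m, m < q → i + m + 1 = j + q → b i m = (-1) ^ i * c m) →
    dt (j + q) (cF j 0 b u) = (-1) ^ (j * q) * (∏ m ∈ Finset.range q, c m) * dt j u := by
  induction q with
  | zero =>
    intro b c _ _
    simp only [add_zero, mul_zero, pow_zero, Finset.range_zero, Finset.prod_empty, one_mul]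
    apply dt_congr
    intro i c _ hc
    simp [cF, hc]
  | succ q ih =>
    intro b c h0 h1
    rw [← add_assoc, dt_expand (j + q) j (by omega)]
    · have e : dt (j + q) (fun i c => cF j 0 b u i (if c < j then c else c + 1))
          = dt (j + q) (cF j 0 (fun i m => b i (m + 1)) u) := by
        apply dt_congr
        intro i c _ _
        by_cases h : c < j
        · simp [cF, h]
        · have h2 : ¬ (c + 1 < j) := by omega
          simp only [cF, h, h2, if_false, Nat.not_lt_zero, zero_add]
          congr 1
          omega
      rw [e, ih _ (fun m => c (m + 1)) (fun i m hm h => h0 i (m + 1) (by omega) (by omega))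
        (fun i m hm h => h1 i (m + 1) (by omega) (by omega))]
      have e2 : cF j 0 b u (j + q) j = (-1) ^ (j + q) * c 0 := by
        simp only [cF, Nat.not_lt_zero, if_false, zero_add, lt_irrefl, Nat.sub_self]
        exact h1 _ _ (by omega) (by omega)
      rw [e2, Finset.prod_range_succ']
      have e3 : (-1 : ℝ) ^ (j + q + j) * (-1) ^ (j + q) = (-1) ^ j := by
        rw [← pow_add, show j + q + j + (j + q) = 2 * (j + q) + j by ring, pow_add, pow_mul]
        simp
      rw [mul_add, pow_add (-1 : ℝ) (j * q), mul_one]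
      linear_combination (c 0 * ((-1) ^ (j * q) * (∏ m ∈ Finset.range q, c (m + 1)) * dt j u)) * e3
    · intro i hi
      simp only [cF, Nat.not_lt_zero, if_false, zero_add, lt_irrefl, Nat.sub_self]
      exact h0 _ _ (by omega) (by omega)

lemma dt_cF (j : ℕ) (u : ℕ → ℕ → ℝ) (q s : ℕ) : ∀ (b : ℕ → ℕ → ℝ) (c : ℕ → ℝ),
    (∀ i m, m < s + q → i + m + 1 < s + j + q → b i m = 0) →
    (∀ i m, m < s + q → i + m + 1 = s + j + q → b i m = (-1) ^ i * c m) →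
    dt (s + j + q) (cF j s b u) =
      (-1) ^ (j * q) * (∏ m ∈ Finset.range (s + q), c m) * dt j u := by
  induction s with
  | zero =>
    intro b c h0 h1
    simp only [zero_add] at *
    exact dt_cF_zero j u q b c h0 h1
  | succ s ih =>
    intro b c h0 h1
    rw [show s + 1 + j + q = s + j + q + 1 by ring, dt_expand (s + j + q) 0 (by omega)]
    · have e : dt (s + j + q) (fun i c => cF j (s + 1) b u i (if c < 0 then c else c + 1))
          = dt (s + j + q) (cF j s (fun i m => b i (m + 1)) u) := by
        apply dt_congr
        intro i c _ _
        simp only [cF, Nat.not_lt_zero, if_false]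
        by_cases h : c < s
        · simp [h]
        · by_cases h3 : c < s + j
          · have h4 : c + 1 < s + 1 + j := by omega
            simp [h, h3, h4]
          · have h4 : ¬ c + 1 < s + 1 + j := by omega
            simp only [h, h3, h4, if_false, add_lt_add_iff_right]
            congr 1
            omega
      rw [e, ih _ (fun m => c (m + 1)) (fun i m hm h => h0 i (m + 1) (by omega) (by omega))
        (fun i m hm h => h1 i (m + 1) (by omega) (by omega))]
      have e2 : cF j (s + 1) b u (s + j + q) 0 = (-1) ^ (s + j + q) * c 0 := by
        simp only [cF, Nat.succ_pos, if_true]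
        exact h1 _ _ (by omega) (by omega)
      rw [e2, show s + 1 + q = (s + q) + 1 by ring, Finset.prod_range_succ']
      have e3 : (-1 : ℝ) ^ (s + j + q + 0) * (-1) ^ (s + j + q) = 1 := by
        rw [← pow_add, show s + j + q + 0 + (s + j + q) = 2 * (s + j + q) by ring, pow_mul]
        simp
      linear_combination (c 0 * ((-1) ^ (j * q) * (∏ m ∈ Finset.range (s + q), c (m + 1)) * dt j u)) * e3
    · intro i hi
      simp only [cF, Nat.succ_pos, if_true]
      exact h0 _ _ (by omega) (by omega)

/-- row operation given by left multiplication by `xMat n i t`. -/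
def stp (n i : ℕ) (t : ℝ) (F : ℕ → ℕ → ℝ) (p q : ℕ) : ℝ :=
  F p q + (if i < n then
      (if p + 1 = i then t * F (p + 1) q else 0) + (if p = n + i then - t * F (n + i - 1) q else 0)
    else
      (if p + 1 = n - 1 then t * F (2 * n - 1) q else 0)
        + (if p + 1 = n then - t * F (2 * n - 2) q else 0))

lemma stp_lt {n i : ℕ} (hi : i < n) (t : ℝ) (F : ℕ → ℕ → ℝ) (p q : ℕ) :
    stp n i t F p q = F p q + ((if p + 1 = i then t * F (p + 1) q else 0)
      + (if p = n + i then - t * F (n + i - 1) q else 0)) := by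
  simp [stp, hi]

lemma stp_n (n : ℕ) (t : ℝ) (F : ℕ → ℕ → ℝ) (p q : ℕ) :
    stp n n t F p q = F p q + ((if p + 1 = n - 1 then t * F (2 * n - 1) q else 0)
        + (if p + 1 = n then - t * F (2 * n - 2) q else 0)) := by
  simp [stp]

def act (n : ℕ) : List ℕ → (ℕ → ℝ) → (ℕ → ℕ → ℝ) → ℕ → ℕ → ℝ
  | [], _, F => F
  | i :: w, t, F => stp n i (t 0) (act n w (fun l => t (1 + l)) F)

lemma act_append (n : ℕ) (w1 w2 : List ℕ) : ∀ (t : ℕ → ℝ) (F : ℕ → ℕ → ℝ),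
    act n (w1 ++ w2) t F = act n w1 t (act n w2 (fun l => t (w1.length + l)) F) := by
  induction w1 with
  | nil => intro t F; simp [act]
  | cons i w ih =>
    intro t F
    simp only [List.cons_append, act, ih, List.length_cons]
    congr 4
    funext l
    congr 1
    ring

def idF (p q : ℕ) : ℝ := if p = q then 1 else 0

lemma sum_ite_val {M : ℕ} (P : Prop) [Decidable P] (a : ℕ) (ha : a < M) (c : ℝ)
    (G : Fin M → ℝ) :
    ∑ x : Fin M, (if P ∧ (x : ℕ) = a then c else 0) * G x
      = if P then c * G ⟨a, ha⟩ else 0 := by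
  by_cases hP : P
  · rw [Finset.sum_eq_single ⟨a, ha⟩]
    · simp [hP]
    · intro b _ hb
      have : (b : ℕ) ≠ a := fun h => hb (Fin.ext h)
      simp [this]
    · simp
  · simp [hP]

lemma xMat_mul {n : ℕ} (hn : 2 ≤ n) (i : ℕ) (hi : 1 ≤ i) (t : ℝ)
    (G : Matrix (Fin (2 * n)) (Fin (2 * n)) ℝ)
    (F : ℕ → ℕ → ℝ) (h : ∀ p q, G p q = F p q) (p q : Fin (2 * n)) :
    (xMat n i t * G) p q = stp n i t F p q := by
  rw [Matrix.mul_apply]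
  have e1 : ∑ x : Fin (2 * n), (if (p : ℕ) = (x : ℕ) then (1 : ℝ) else 0) * G x q = F p q := by
    have := sum_ite_val True (p : ℕ) p.2 1 (fun x => G x q)
    simp only [true_and, if_true, one_mul, h] at this
    rw [← this]
    apply Finset.sum_congr rfl
    intro x _
    simp only [eq_comm, h]
  by_cases hin : i < n
  · simp only [xMat, Matrix.of_apply, hin, if_true, add_mul, Finset.sum_add_distrib, stp, e1]
    congr 2
    · have := sum_ite_val ((p : ℕ) + 1 = i) i (by omega) t (fun x => G x q)
      simp only [h] at this
      simp only [add_left_inj, h]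
      rw [this]
      split_ifs with h1
      · rw [h1]
      · rfl
    · have := sum_ite_val ((p : ℕ) = n + i) (n + i - 1) (by omega) (-t) (fun x => G x q)
      simp only [h] at this
      simp only [add_left_inj, h]
      rw [← this]
      apply Finset.sum_congr rfl
      intro x _
      congr 2
      apply propext
      constructor <;> rintro ⟨h1, h2⟩ <;> constructor <;> omega
  · simp only [xMat, Matrix.of_apply, hin, if_false, add_mul, Finset.sum_add_distrib, stp, e1]
    congr 2
    · have := sum_ite_val ((p : ℕ) + 1 = n - 1) (2 * n - 1) (by omega) t (fun x => G x q)
      simp only [h] at this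
      simp only [h]
      rw [← this]
      apply Finset.sum_congr rfl
      intro x _
      congr 2
      apply propext
      constructor <;> rintro ⟨h1, h2⟩ <;> constructor <;> omega
    · have := sum_ite_val ((p : ℕ) + 1 = n) (2 * n - 2) (by omega) (-t) (fun x => G x q)
      simp only [h] at this
      simp only [h]
      rw [← this]
      apply Finset.sum_congr rfl
      intro x _
      congr 2
      apply propext
      constructor <;> rintro ⟨h1, h2⟩ <;> constructor <;> omega

lemma prod_eq_act {n : ℕ} (hn : 2 ≤ n) (w : List ℕ) (hw : ∀ i ∈ w, 1 ≤ i) :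
    ∀ (t : ℕ → ℝ) (p q : Fin (2 * n)),
    ((List.range w.length).map (fun l => xMat n (w.getD l 0) (t l))).prod p q
      = act n w t idF p q := by
  induction w with
  | nil =>
    intro t p q
    simp [act, idF, Matrix.one_apply, Fin.ext_iff]
  | cons i w ih =>
    intro t p q
    rw [List.length_cons, List.range_succ_eq_map]
    simp only [List.map_cons, List.map_map, List.prod_cons, List.getD_cons_zero, act]
    apply xMat_mul hn i (hw i (by simp))
    intro p q
    rw [← ih (fun i hi => hw i (by simp [hi]))]
    have e : List.map ((fun l => xMat n ((i :: w).getD l 0) (t l)) ∘ Nat.succ)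
        (List.range w.length)
        = List.map (fun l => xMat n (w.getD l 0) (t (1 + l))) (List.range w.length) := by
      apply List.map_congr_left
      intro l _
      simp [add_comm]
    rw [e]

/-- `dr b c` is the list `b+c-1, …, b`. -/
def dr (b c : ℕ) : List ℕ := (List.range' b c).reverse

lemma dr_succ (b c : ℕ) : dr b (c + 1) = (b + c) :: dr b c := by
  simp [dr, List.range'_concat]

lemma act_dr_top {n b : ℕ} (hb : 1 ≤ b) (c : ℕ) : ∀ (hc : b + c ≤ n) (t : ℕ → ℝ)
    (F : ℕ → ℕ → ℝ) (p q : ℕ) (hp : p < n),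
    act n (dr b c) t F p q = F p q +
      if b ≤ p + 1 ∧ p + 1 < b + c then t (b + c - 2 - p) * F (p + 1) q else 0 := by
  induction c with
  | zero =>
    intro hc t F p q hp
    have : ¬ (b ≤ p + 1 ∧ p + 1 < b + 0) := by omega
    rw [if_neg this]
    simp [dr, act]
  | succ c ih =>
    intro hc t F p q hp
    rw [dr_succ, act, stp_lt (by omega), ih (by omega) _ _ _ _ hp]
    have h1 : p ≠ n + (b + c) := by omega
    simp only [h1, if_false, add_zero]
    by_cases h2 : p + 1 = b + c
    · have h3 : ¬ (b ≤ p + 1 ∧ p + 1 < b + c) := by omega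
      have h4 : (b ≤ p + 1 ∧ p + 1 < b + (c + 1)) := by omega
      rw [if_neg h3, if_pos h2, if_pos h4, ih (by omega) _ _ _ _ (by omega)]
      have h5 : ¬ (b ≤ p + 1 + 1 ∧ p + 1 + 1 < b + c) := by omega
      rw [if_neg h5, show b + (c + 1) - 2 - p = 0 by omega]
      ring
    · rw [if_neg h2]
      by_cases h3 : (b ≤ p + 1 ∧ p + 1 < b + c)
      · have h4 : (b ≤ p + 1 ∧ p + 1 < b + (c + 1)) := by omega
        rw [if_pos h3, if_pos h4, show b + (c + 1) - 2 - p = 1 + (b + c - 2 - p) by omega]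
        ring
      · have h4 : ¬ (b ≤ p + 1 ∧ p + 1 < b + (c + 1)) := by omega
        rw [if_neg h3, if_neg h4]
        ring

lemma act_dr_hi {n b : ℕ} (hb : 1 ≤ b) (c : ℕ) : ∀ (hc : b + c ≤ n) (t : ℕ → ℝ)
    (F : ℕ → ℕ → ℝ) (p q : ℕ) (hp : n + b + c ≤ p),
    act n (dr b c) t F p q = F p q := by
  induction c with
  | zero => intro hc t F p q hp; simp [dr, act]
  | succ c ih =>
    intro hc t F p q hp
    rw [dr_succ, act, stp_lt (by omega), ih (by omega) _ _ _ _ (by omega), if_neg (by omega),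
      if_neg (by omega)]
    ring

lemma act_dr_hot {n b : ℕ} (hb : 1 ≤ b) (c : ℕ) : ∀ (hc : b + c ≤ n) (t : ℕ → ℝ)
    (F : ℕ → ℕ → ℝ) (hF : ∀ p, F p (n + b - 1) = idF p (n + b - 1)),
    act n (dr b c) t F (n + b + c - 1) (n + b - 1)
      = (-1) ^ c * ∏ l ∈ Finset.range c, t l := by
  induction c with
  | zero => intro hc t F hF; simp [dr, act, hF, idF]
  | succ c ih =>
    intro hc t F hF
    rw [dr_succ, act, stp_lt (by omega), act_dr_hi hb _ (by omega) _ _ _ _ (by omega), hF,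
      if_neg (by omega), if_pos (by omega), idF, if_neg (by omega),
      show n + (b + c) - 1 = n + b + c - 1 by omega, ih (by omega) _ _ hF,
      Finset.prod_range_succ', pow_succ]
    simp only [add_comm 1]
    ring

/-- Column `n+m` is a unit column. -/
def UC (n m : ℕ) (F : ℕ → ℕ → ℝ) : Prop := ∀ p, F p (n + m) = idF p (n + m)

lemma UC_stp {n m i : ℕ} (F : ℕ → ℕ → ℝ) (t : ℝ) (h : UC n m F)
    (hi : (i < n ∧ m + 2 ≤ i) ∨ (i = n ∧ m + 2 < n)) : UC n m (stp n i t F) := by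
  intro p
  rcases hi with ⟨h1, h2⟩ | ⟨rfl, h2⟩
  · rw [stp_lt h1, h p, h, h, idF, idF, idF]
    rw [if_neg (show ¬ n + i - 1 = n + m by omega)]
    by_cases h3 : p + 1 = i
    · rw [if_neg (show ¬ p + 1 = n + m by omega)]; simp
    · simp [h3]
  · rw [stp_n, h p, h, h, idF, idF, idF]
    rw [if_neg (show ¬ 2 * i - 1 = i + m by omega), if_neg (show ¬ 2 * i - 2 = i + m by omega)]
    simp

lemma UC_act {n m : ℕ} (w : List ℕ)
    (hw : ∀ i ∈ w, (i < n ∧ m + 2 ≤ i) ∨ (i = n ∧ m + 2 < n)) :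
    ∀ (t : ℕ → ℝ) (F : ℕ → ℕ → ℝ), UC n m F → UC n m (act n w t F) := by
  induction w with
  | nil => intro t F h; simpa [act] using h
  | cons i w ih =>
    intro t F h
    exact UC_stp _ _ (ih (fun i hi => hw i (by simp [hi])) _ _ h) (hw i (by simp))

/-- The upper left block is upper unitriangular and the lower left block vanishes. -/
def UT (n : ℕ) (F : ℕ → ℕ → ℝ) : Prop :=
  (∀ p q, q < n → q < p → F p q = 0) ∧ (∀ p, p < n → F p p = 1)

lemma UT_stp {n i : ℕ} (hn : 2 ≤ n) (hi : 1 ≤ i) (hi' : i ≤ n) (F : ℕ → ℕ → ℝ) (t : ℝ) (h : UT n F) :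
    UT n (stp n i t F) := by
  rcases hi'.lt_or_eq with h1 | rfl
  · refine ⟨fun p q hq hqp => ?_, fun p hp => ?_⟩
    · rw [stp_lt h1, h.1 _ _ hq hqp, h.1 (p + 1) _ hq (by omega), h.1 (n + i - 1) _ hq (by omega)]
      simp
    · rw [stp_lt h1, h.2 _ hp, h.1 (p + 1) _ hp (by omega), if_neg (show ¬ p = n + i by omega)]
      simp
  · refine ⟨fun p q hq hqp => ?_, fun p hp => ?_⟩
    · rw [stp_n, h.1 _ _ hq hqp, h.1 (2 * i - 1) _ hq (by omega), h.1 (2 * i - 2) _ hq (by omega)]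
      simp
    · rw [stp_n, h.2 _ hp, h.1 (2 * i - 1) _ hp (by omega)]
      by_cases h2 : p + 1 = i
      · rw [h.1 (2 * i - 2) _ hp (by omega)]; simp
      · simp [h2]

lemma UT_act {n : ℕ} (hn : 2 ≤ n) (w : List ℕ) (hw : ∀ i ∈ w, 1 ≤ i ∧ i ≤ n) :
    ∀ (t : ℕ → ℝ) (F : ℕ → ℕ → ℝ), UT n F → UT n (act n w t F) := by
  induction w with
  | nil => intro t F h; simpa [act] using h
  | cons i w ih =>
    intro t F h
    exact UT_stp hn (hw i (by simp)).1 (hw i (by simp)).2 _ _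
      (ih (fun i hi => hw i (by simp [hi])) _ _ h)

lemma UT_id (n : ℕ) : UT n idF :=
  ⟨fun p q _ h => by rw [idF, if_neg (by omega)], fun p _ => by simp [idF]⟩

def run (n r : ℕ) : List ℕ :=
  if r % 2 = 0 then n :: dr (r + 1) (n - 2 - r) else dr (r + 1) (n - 1 - r)

def hot (n r : ℕ) : ℕ := if r % 2 = 0 then n - 1 else 2 * n - 1

def Ei (n r i : ℕ) : ℕ := if i + 1 = n then hot n r else i

lemma mem_dr {b c i : ℕ} (h : i ∈ dr b c) : b ≤ i ∧ i < b + c := by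
  simpa [dr] using h

lemma length_dr (b c : ℕ) : (dr b c).length = c := by simp [dr]

lemma run_even {n r : ℕ} (h : r % 2 = 0) : run n r = n :: dr (r + 1) (n - 2 - r) := by
  simp [run, h]

lemma run_odd {n r : ℕ} (h : ¬ r % 2 = 0) : run n r = dr (r + 1) (n - 1 - r) := by
  simp [run, h]

lemma run_length {n r : ℕ} (hr : r < 2 * (n / 2)) : (run n r).length = n - 1 - r := by
  by_cases h : r % 2 = 0
  · rw [run_even h, List.length_cons, length_dr]; omega
  · rw [run_odd h, length_dr]

lemma run_bd {n r : ℕ} (hr : r < 2 * (n / 2)) : ∀ i ∈ run n r, 1 ≤ i ∧ i ≤ n := by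
  intro i hi
  by_cases h : r % 2 = 0
  · rw [run_even h, List.mem_cons] at hi
    rcases hi with rfl | hi
    · omega
    · have := mem_dr hi; omega
  · rw [run_odd h] at hi
    have := mem_dr hi; omega

lemma run_UC {n r m : ℕ} (hr : r < 2 * (n / 2)) (hm : m < r) (t : ℕ → ℝ) (F : ℕ → ℕ → ℝ)
    (hF : UC n m F) : UC n m (act n (run n r) t F) := by
  apply UC_act _ _ _ _ hF
  intro i hi
  by_cases h : r % 2 = 0
  · rw [run_even h, List.mem_cons] at hi
    rcases hi with rfl | hi
    · omega
    · have := mem_dr hi; omega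
  · rw [run_odd h] at hi
    have := mem_dr hi; omega

lemma run_low {n r p q : ℕ} (hr : r < 2 * (n / 2)) (hp : p < r) (t : ℕ → ℝ)
    (F : ℕ → ℕ → ℝ) : act n (run n r) t F p q = F p q := by
  by_cases h : r % 2 = 0
  · rw [run_even h, act, stp_n, act_dr_top (by omega) _ (by omega) _ _ _ _ (by omega),
      if_neg (by omega), if_neg (by omega), if_neg (by omega)]
    simp
  · rw [run_odd h, act_dr_top (by omega) _ (by omega) _ _ _ _ (by omega), if_neg (by omega)]
    simp

lemma run_mid {n r i q : ℕ} (hr : r < 2 * (n / 2)) (hi : r ≤ i) (hi' : i + 2 ≤ n) (t : ℕ → ℝ)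
    (F : ℕ → ℕ → ℝ) : act n (run n r) t F i q
      = F i q + t (n - 2 - i) * F (Ei n (r + 1) (i + 1)) q := by
  by_cases h : r % 2 = 0
  · have h' : ¬ (r + 1) % 2 = 0 := by omega
    rw [run_even h, act, stp_n, act_dr_top (by omega) _ (by omega) _ _ _ _ (by omega),
      if_neg (show ¬ i + 1 = n by omega)]
    by_cases h2 : i + 2 = n
    · rw [if_neg (by omega), if_pos (by omega), act_dr_hi (by omega) _ (by omega) _ _ _ _ (by omega),
        Ei, if_pos (by omega), hot, if_neg h', show n - 2 - i = 0 by omega]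
      ring
    · rw [if_pos (by omega), if_neg (by omega), Ei, if_neg (by omega),
        show 1 + (r + 1 + (n - 2 - r) - 2 - i) = n - 2 - i by omega]
      ring
  · have h' : (r + 1) % 2 = 0 := by omega
    rw [run_odd h, act_dr_top (by omega) _ (by omega) _ _ _ _ (by omega), if_pos (by omega),
      show r + 1 + (n - 1 - r) - 2 - i = n - 2 - i by omega, Ei, hot, if_pos h']
    by_cases h2 : i + 2 = n
    · rw [if_pos (by omega), show n - 1 = i + 1 by omega]
    · rw [if_neg (by omega)]

lemma run_hot {n r : ℕ} (hr : r < 2 * (n / 2)) (hr' : r + 2 ≤ n) (t : ℕ → ℝ)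
    (F : ℕ → ℕ → ℝ) (hF : UC n r F) : act n (run n r) t F (hot n r) (n + r)
      = (-1) ^ (n - 1 - r) * ∏ l ∈ Finset.range (n - 1 - r), t l := by
  have hF' : ∀ p, F p (n + (r + 1) - 1) = idF p (n + (r + 1) - 1) := hF
  by_cases h : r % 2 = 0
  · have := act_dr_hot (n := n) (b := r + 1) (by omega) (n - 2 - r) (by omega)
      (fun l => t (1 + l)) F hF'
    rw [show n + (r + 1) + (n - 2 - r) - 1 = 2 * n - 2 by omega,
      show n + (r + 1) - 1 = n + r by omega] at this
    rw [run_even h, act, stp_n, hot, if_pos h, this, if_neg (by omega), if_pos (by omega),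
      act_dr_top (by omega) _ (by omega) _ _ _ _ (by omega), if_neg (by omega), hF, idF,
      if_neg (by omega), show n - 1 - r = (n - 2 - r) + 1 by omega, Finset.prod_range_succ',
      pow_succ]
    simp only [add_comm 1]
    ring
  · have := act_dr_hot (n := n) (b := r + 1) (by omega) (n - 1 - r) (by omega) t F hF'
    rw [show n + (r + 1) + (n - 1 - r) - 1 = 2 * n - 1 by omega,
      show n + (r + 1) - 1 = n + r by omega] at this
    rw [run_odd h, hot, if_neg h, this]

lemma dt_bidiag (j : ℕ) (a : ℕ → ℝ) (y M : ℕ → ℕ → ℝ) (h0 : ∀ c < j, y 0 c = 0)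
    (hM : ∀ i c, i < j → c < j → M i c = y i c + a i * y (i + 1) c) :
    dt j M = (∏ i ∈ Finset.range j, a i) * dt j (fun i c => y (i + 1) c) := by
  let T : Matrix (Fin j) (Fin j) ℝ := Matrix.of fun i k =>
    if i = k then a i else if (k : ℕ) + 1 = i then 1 else 0
  have hT : T.det = ∏ i ∈ Finset.range j, a i := by
    rw [Matrix.det_of_isLowerTriangular T, Finset.prod_range]
    · simp [T]
    · intro i k hik
      have : (i : ℕ) < k := hik
      simp only [T, Matrix.of_apply]
      rw [if_neg (by intro h; rw [h] at this; omega), if_neg (by omega)]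
  rw [← hT]
  unfold dt
  rw [← Matrix.det_mul]
  congr 1
  ext i c
  rw [Matrix.mul_apply, Matrix.of_apply, hM _ _ i.2 c.2]
  have : ∀ k : Fin j, T i k * (Matrix.of fun (i c : Fin j) => y (i + 1) c) k c
      = (if i = k then a i * y (k + 1) c else 0) + (if (k : ℕ) + 1 = i then y (k + 1) c else 0) := by
    intro k
    simp only [T, Matrix.of_apply]
    by_cases h1 : i = k
    · subst h1; simp
    · simp [h1]
  rw [Finset.sum_congr rfl (fun k _ => this k), Finset.sum_add_distrib]
  simp only [Finset.sum_ite_eq, Finset.mem_univ, if_true]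
  rw [add_comm]
  congr 1
  rcases Nat.eq_zero_or_pos (i : ℕ) with h | h
  · rw [h, h0 _ c.2]
    symm
    apply Finset.sum_eq_zero
    intro k _
    rw [if_neg (by omega)]
  · have hi := i.2
    rw [Finset.sum_eq_single (⟨(i : ℕ) - 1, by omega⟩ : Fin j)]
    · simp only
      rw [if_pos (by omega)]
      congr 1
      omega
    · intro b _ hb
      rw [if_neg]
      intro h'
      apply hb
      ext
      simp only
      omega
    · simp

lemma dt_unitri (j : ℕ) (M : ℕ → ℕ → ℝ) (h0 : ∀ i c, c < i → i < j → M i c = 0)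
    (h1 : ∀ i < j, M i i = 1) : dt j M = 1 := by
  unfold dt
  rw [Matrix.det_of_isUpperTriangular]
  · exact Finset.prod_eq_one fun i _ => h1 i i.2
  · intro i k hik
    exact h0 i k hik i.2

def tl (n r c : ℕ) : List ℕ := ((List.range' r c).map (run n)).flatten

lemma tl_succ (n r c : ℕ) : tl n r (c + 1) = run n r ++ tl n (r + 1) c := by
  simp [tl, List.range'_succ]

lemma tl_bd {n : ℕ} (c : ℕ) : ∀ (r : ℕ), r + c = 2 * (n / 2) →
    ∀ i ∈ tl n r c, 1 ≤ i ∧ i ≤ n := by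
  induction c with
  | zero => intro r _ i hi; simp [tl] at hi
  | succ c ih =>
    intro r h i hi
    rw [tl_succ, List.mem_append] at hi
    rcases hi with hi | hi
    · exact run_bd (by omega) i hi
    · exact ih (r + 1) (by omega) i hi

lemma act_tl_succ {n r c : ℕ} (t : ℕ → ℝ) (F : ℕ → ℕ → ℝ) : act n (tl n r (c + 1)) t F
    = act n (run n r) t (act n (tl n (r + 1) c) (fun l => t ((run n r).length + l)) F) := by
  rw [tl_succ, act_append]

lemma tl_UC {n : ℕ} (c : ℕ) : ∀ (r : ℕ), r + c = 2 * (n / 2) → ∀ (t : ℕ → ℝ) (m : ℕ), m < r →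
    UC n m (act n (tl n r c) t idF) := by
  induction c with
  | zero => intro r _ t m hm p; simp [tl, act]
  | succ c ih =>
    intro r h t m hm
    rw [act_tl_succ]
    exact run_UC (by omega) hm _ _ (ih _ (by omega) _ _ (by omega))

lemma tl_row {n : ℕ} (c : ℕ) : ∀ (r : ℕ), r + c = 2 * (n / 2) → ∀ (t : ℕ → ℝ) (p q : ℕ), p < r →
    act n (tl n r c) t idF p q = idF p q := by
  induction c with
  | zero => intro r _ t m hm p; simp [tl, act]
  | succ c ih =>
    intro r h t p q hm
    rw [act_tl_succ, run_low (by omega) hm, ih _ (by omega) _ _ _ (by omega)]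

lemma tl_zero {n : ℕ} (hn : 2 ≤ n) (c : ℕ) : ∀ (r : ℕ), r + c = 2 * (n / 2) →
    ∀ (t : ℕ → ℝ) (i m : ℕ), i < n → m + 1 < n → i + m + 1 < n + r →
    act n (tl n r c) t idF (Ei n r i) (n + m) = 0 := by
  induction c with
  | zero =>
    intro r h t i m hi hm him
    simp only [tl, List.range'_zero, List.map_nil, List.flatten_nil, act, idF, Ei, hot]
    split_ifs <;> first | rfl | omega
  | succ c ih =>
    intro r h t i m hi hm him
    by_cases h1 : i + 1 = n
    · rw [tl_UC _ _ h _ _ (by omega), idF, Ei, hot]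
      split_ifs <;> first | rfl | omega
    · rw [Ei, if_neg h1, act_tl_succ]
      have e1 : ∀ t, act n (tl n (r + 1) c) t idF i (n + m) = 0 := by
        intro t
        have := ih (r + 1) (by omega) t i m hi hm (by omega)
        rwa [Ei, if_neg h1] at this
      by_cases h2 : r ≤ i
      · rw [run_mid (by omega) h2 (by omega), e1, ih (r + 1) (by omega) _ _ _ (by omega) hm (by omega)]
        simp
      · rw [run_low (by omega) (by omega), e1]

lemma tl_mono {n : ℕ} (hn : 2 ≤ n) (c : ℕ) : ∀ (r : ℕ), r + c = 2 * (n / 2) →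
    ∀ (i m : ℕ), i < n → m + 1 < n → i + m + 1 = n + r →
    ∃ f, MonoF (tl n r c).length f ∧ ∀ t : ℕ → ℝ,
    act n (tl n r c) t idF (Ei n r i) (n + m) = (-1) ^ (n - 1 - m) * f t := by
  induction c with
  | zero =>
    intro r h i m hi hm him
    omega
  | succ c ih =>
    intro r h i m hi hm him
    have hlen : (tl n r (c + 1)).length = (run n r).length + (tl n (r + 1) c).length := by
      rw [tl_succ, List.length_append]
    have hrl := run_length (n := n) (r := r) (by omega)
    by_cases h1 : i + 1 = n
    · obtain rfl : m = r := by omega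
      refine ⟨fun t => ∏ l ∈ Finset.range (n - 1 - m), t l, ?_, ?_⟩
      · apply MonoF.prod _ (fun l t => t l)
        intro l hl
        exact MonoF.var (by omega)
      · intro t
        rw [Ei, if_pos h1, act_tl_succ, run_hot (by omega) (by omega)]
        exact tl_UC _ _ (by omega) _ _ (by omega)
    · obtain ⟨f, hf, hf'⟩ := ih (r + 1) (by omega) (i + 1) m (by omega) hm (by omega)
      refine ⟨fun t => t (n - 2 - i) * f (fun l => t ((run n r).length + l)), ?_, ?_⟩
      · rw [hlen]
        exact (MonoF.var (by omega)).mul (hf.shift _)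
      · intro t
        rw [act_tl_succ, Ei, if_neg h1, run_mid (by omega) (by omega) (by omega), hf']
        have := tl_zero hn c (r + 1) (by omega) (fun l => t ((run n r).length + l)) i m hi hm (by omega)
        rw [Ei, if_neg h1] at this
        rw [this]
        ring

lemma tl_UT {n : ℕ} (hn : 2 ≤ n) (c r : ℕ) (h : r + c = 2 * (n / 2)) (t : ℕ → ℝ) :
    UT n (act n (tl n r c) t idF) :=
  UT_act hn _ (tl_bd c r h) _ _ (UT_id n)

lemma tl_det {n : ℕ} (hn : 2 ≤ n) (j s : ℕ) (hs : s + j + 1 ≤ n) (c : ℕ) :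
    ∀ (r : ℕ), r + c = 2 * (n / 2) → r ≤ s →
    MonoF (tl n r c).length (fun t => dt j (fun i k => act n (tl n r c) t idF (r + i) (s + k))) := by
  have base : ∀ r c, r + c = 2 * (n / 2) → r = s →
    MonoF (tl n r c).length (fun t => dt j (fun i k => act n (tl n r c) t idF (r + i) (s + k))) := by
    rintro r c h rfl
    have : ∀ t, dt j (fun i k => act n (tl n r c) t idF (r + i) (r + k)) = 1 := by
      intro t
      have := tl_UT hn c r h t
      apply dt_unitri
      · intro i k h1 h2
        exact this.1 _ _ (by omega) (by omega)
      · intro i h1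
        exact this.2 _ (by omega)
    simp only [this]
    exact MonoF.one _
  induction c with
  | zero =>
    intro r h hr
    rcases Nat.eq_zero_or_pos j with h0 | h0
    · subst h0
      simp only [dt, Matrix.det_isEmpty]
      exact MonoF.one _
    · exact base r 0 h (by omega)
  | succ c ih =>
    intro r h hr
    by_cases h1 : r = s
    · exact base r _ h h1
    have hlen : (tl n r (c + 1)).length = (run n r).length + (tl n (r + 1) c).length := by
      rw [tl_succ, List.length_append]
    have hrl := run_length (n := n) (r := r) (by omega)
    have := ih (r + 1) (by omega) (by omega)
    have e : ∀ t, dt j (fun i k => act n (tl n r (c + 1)) t idF (r + i) (s + k))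
        = (∏ i ∈ Finset.range j, t (n - 2 - (r + i))) *
          dt j (fun i k => act n (tl n (r + 1) c) (fun l => t ((run n r).length + l)) idF
            (r + 1 + i) (s + k)) := by
      intro t
      rw [dt_bidiag j (fun i => t (n - 2 - (r + i)))
        (fun i k => act n (tl n (r + 1) c) (fun l => t ((run n r).length + l)) idF
            (r + i) (s + k))]
      · congr 1
        apply dt_congr
        intro i k _ _
        rw [show r + (i + 1) = r + 1 + i by ring]
      · intro k hk
        rw [tl_row c (r + 1) (by omega) _ _ _ (by omega), idF, if_neg (by omega)]
      · intro i k hi hk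
        rw [act_tl_succ, run_mid (by omega) (by omega) (by omega), Ei, if_neg (by omega)]
        rfl
    simp only [e]
    rw [hlen]
    apply MonoF.mul
    · apply MonoF.prod _ (fun i t => t (n - 2 - (r + i)))
      intro i hi
      exact MonoF.var (by omega)
    · exact this.shift _

lemma wordD_eq {n : ℕ} (hn : 2 ≤ n) : wordD n = tl n 0 (2 * (n / 2)) := by
  have key : ∀ h, ((List.range h).map (fun m =>
      n :: (decRun (n - 2) (2 * m + 1) ++ decRun (n - 1) (2 * m + 2)))).flatten
      = ((List.range (2 * h)).map (run n)).flatten := by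
    intro h
    induction h with
    | zero => simp
    | succ h ih =>
      rw [List.range_succ, show 2 * (h + 1) = 2 * h + 1 + 1 by ring, List.range_succ,
        List.range_succ]
      simp only [List.map_append, List.flatten_append, ih, List.map_cons, List.map_nil,
        List.flatten_cons, List.flatten_nil, List.append_nil, List.append_assoc]
      rw [run_even (by omega), run_odd (by omega)]
      simp only [decRun, dr, List.cons_append]
      rw [show n - 2 + 1 - (2 * h + 1) = n - 2 - 2 * h by omega,
        show n - 1 + 1 - (2 * h + 2) = n - 1 - (2 * h + 1) by omega]
  rw [wordD, key, tl, List.range_eq_range']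

lemma tl_length {n : ℕ} (c : ℕ) : ∀ r, r + c = 2 * (n / 2) →
    2 * (tl n r c).length = (n - r) * (n - r - 1) := by
  induction c with
  | zero =>
    intro r h
    have : n - r - 1 = 0 := by omega
    simp [tl, this]
  | succ c ih =>
    intro r h
    rw [tl_succ, List.length_append, mul_add, ih _ (by omega), run_length (by omega)]
    obtain ⟨x, hx⟩ : ∃ x, n = r + 1 + x := ⟨n - (r + 1), by omega⟩
    subst hx
    rw [show r + 1 + x - 1 - r = x by omega, show r + 1 + x - (r + 1) = x by omega,
      show r + 1 + x - r = x + 1 by omega, show x + 1 - 1 = x by omega]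
    rcases x with _ | x
    · rfl
    · simp only [Nat.add_sub_cancel]; ring

lemma Npar_eq {n : ℕ} : Npar n = (tl n 0 (2 * (n / 2))).length := by
  have := tl_length (n := n) (2 * (n / 2)) 0 (by omega)
  simp only [Nat.sub_zero] at this
  rw [Npar, ← this]
  omega

lemma prodX_eq {n : ℕ} (hn : 2 ≤ n) (t : ℕ → ℝ) (p q : Fin (2 * n)) :
    prodX n t p q = act n (tl n 0 (2 * (n / 2))) t idF p q := by
  rw [prodX, Npar_eq, wordD_eq hn]
  exact prod_eq_act hn _ (fun i hi => (tl_bd _ _ (by omega) i hi).1) t p q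

/-- The minor as an `n × n` determinant. -/
lemma minor_eq (n j s : ℕ) (hs : s + j ≤ n) (A : Matrix (Fin n) (Fin n) ℝ) :
    Matrix.det (Matrix.of fun (p q : Fin (n - j)) =>
      A (if (p : ℕ) < s
          then ⟨(p : ℕ), by have := p.isLt; omega⟩
          else ⟨(p : ℕ) + j, by have := p.isLt; omega⟩)
        ⟨(q : ℕ), by have := q.isLt; omega⟩)
    = Matrix.det (Matrix.of fun (i p : Fin n) =>
        if h : (p : ℕ) < s then A i p else if (p : ℕ) < s + j then (if i = p then 1 else 0)
        else A i ⟨(p : ℕ) - j, by have := p.isLt; omega⟩) := by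
  let g : Fin (n - j) ⊕ Fin j → Fin n := Sum.elim
    (fun p => if (p : ℕ) < s
          then ⟨(p : ℕ), by have := p.isLt; omega⟩
          else ⟨(p : ℕ) + j, by have := p.isLt; omega⟩)
    (fun q => ⟨s + (q : ℕ), by have := q.isLt; omega⟩)
  have gl : ∀ p : Fin (n - j), (g (Sum.inl p) : ℕ) = if (p : ℕ) < s then (p : ℕ) else p + j := by
    intro p
    simp only [g, Sum.elim_inl]
    split_ifs <;> rfl
  have gr : ∀ q : Fin j, (g (Sum.inr q) : ℕ) = s + q := fun q => rfl
  have hg : Function.Bijective g := by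
    rw [Fintype.bijective_iff_injective_and_card]
    constructor
    · rintro (a | a) (b | b) hab
      · have h := congrArg Fin.val hab
        rw [gl, gl] at h
        congr 1
        ext
        split_ifs at h <;> omega
      · have h := congrArg Fin.val hab
        rw [gl, gr] at h
        have := b.2
        split_ifs at h <;> omega
      · have h := congrArg Fin.val hab
        rw [gl, gr] at h
        have := a.2
        split_ifs at h <;> omega
      · have h := congrArg Fin.val hab
        rw [gr, gr] at h
        congr 1
        ext
        omega
    · simp
      omega
  rw [← Matrix.det_submatrix_equiv_self (Equiv.ofBijective g hg) (Matrix.of fun (i p : Fin n) =>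
        if h : (p : ℕ) < s then A i p else if (p : ℕ) < s + j then (if i = p then 1 else 0)
        else A i ⟨(p : ℕ) - j, by have := p.isLt; omega⟩)]
  rw [← Matrix.fromBlocks_toBlocks (Matrix.submatrix _ _ _)]
  have h12 : (Matrix.submatrix (Matrix.of fun (i p : Fin n) =>
        if h : (p : ℕ) < s then A i p else if (p : ℕ) < s + j then (if i = p then 1 else 0)
        else A i ⟨(p : ℕ) - j, by have := p.isLt; omega⟩) (Equiv.ofBijective g hg)
        (Equiv.ofBijective g hg)).toBlocks₁₂ = 0 := by
    ext p q
    simp only [Matrix.toBlocks₁₂, Matrix.submatrix_apply, Matrix.of_apply, Equiv.ofBijective_apply,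
      Matrix.zero_apply, gr]
    have := q.2
    rw [dif_neg (by omega), if_pos (by omega), if_neg]
    intro h
    have h := congrArg Fin.val h
    rw [gl, gr] at h
    split_ifs at h <;> omega
  have h22 : (Matrix.submatrix (Matrix.of fun (i p : Fin n) =>
        if h : (p : ℕ) < s then A i p else if (p : ℕ) < s + j then (if i = p then 1 else 0)
        else A i ⟨(p : ℕ) - j, by have := p.isLt; omega⟩) (Equiv.ofBijective g hg)
        (Equiv.ofBijective g hg)).toBlocks₂₂ = 1 := by
    ext p q
    simp only [Matrix.toBlocks₂₂, Matrix.submatrix_apply, Matrix.of_apply, Equiv.ofBijective_apply,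
      gr]
    have := q.2
    rw [dif_neg (by omega), if_pos (by omega), Matrix.one_apply]
    simp only [hg.1.eq_iff, Sum.inr.injEq]
  rw [h12, h22, Matrix.det_fromBlocks_zero₁₂, Matrix.det_one, mul_one]
  congr 1
  ext p q
  simp only [Matrix.toBlocks₁₁, Matrix.submatrix_apply, Matrix.of_apply, Equiv.ofBijective_apply]
  by_cases h : (q : ℕ) < s
  · rw [dif_pos (by rw [gl, if_pos h]; exact h)]
    congr 1
    ext
    rw [gl, if_pos h]
  · have e := gl q
    rw [if_neg h] at e
    rw [dif_neg (by omega), if_neg (show ¬ ((g (Sum.inl q) : Fin n) : ℕ) < s + j by omega)]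
    congr 1
    ext
    simp only [e]
    omega

lemma main_eq (n j s : ℕ) (hn : 2 ≤ n) (hs : s + j ≤ n) (t : ℕ → ℝ) :
    Matrix.det (Matrix.of fun (p q : Fin (n - j)) =>
      Amat n t (if (p : ℕ) < s
          then ⟨(p : ℕ), by have := p.isLt; omega⟩
          else ⟨(p : ℕ) + j, by have := p.isLt; omega⟩)
        ⟨(q : ℕ), by have := q.isLt; omega⟩)
    = dt n (cF j s (fun i m => act n (tl n 0 (2 * (n / 2))) t idF i (n + m))
        (fun i c => act n (tl n 0 (2 * (n / 2))) t idF i (s + c))) := by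
  rw [minor_eq n j s hs]
  have hX1 : (X1 n t).det = 1 := by
    have h := tl_UT hn (2 * (n / 2)) 0 (by omega) t
    have e : (X1 n t).det = dt n (act n (tl n 0 (2 * (n / 2))) t idF) := by
      unfold dt X1
      congr 1
      ext p q
      simp only [Matrix.of_apply, prodX_eq hn]
    rw [e]
    exact dt_unitri _ _ (fun i c h1 h2 => h.1 _ _ (by omega) h1) (fun i hi => h.2 i hi)
  have hXA : X1 n t * Amat n t = X2 n t := by
    rw [Amat, ← Matrix.mul_assoc, Matrix.mul_nonsing_inv _ (by rw [hX1]; exact isUnit_one),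
      Matrix.one_mul]
  refine (one_mul _).symm.trans ?_
  conv_lhs =>
    arg 1
    rw [← hX1]
  rw [← Matrix.det_mul]
  unfold dt
  congr 1
  ext i p
  rw [Matrix.mul_apply]
  simp only [Matrix.of_apply, cF]
  have hB : ∀ q : Fin n, ∑ x, X1 n t i x * Amat n t x q
      = act n (tl n 0 (2 * (n / 2))) t idF i (n + q) := by
    intro q
    rw [← Matrix.mul_apply, hXA]
    simp only [X2, Matrix.of_apply, prodX_eq hn]
  by_cases h1 : (p : ℕ) < s
  · simp only [h1, dif_pos, if_true, hB]
  · by_cases h2 : (p : ℕ) < s + j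
    · simp only [h1, h2, dite_false, if_true, if_false, mul_ite, mul_one, mul_zero,
        Finset.sum_ite_eq', Finset.mem_univ]
      simp only [X1, Matrix.of_apply, prodX_eq hn]
      congr 1
      omega
    · simp only [h1, h2, dite_false, if_false, hB]

/-- Each minor `M_{j,k}(A(t))` is a monomial with coefficient `1` in the
parameters `t_1, …, t_N`, with exponents depending only on `n`, `j`, `k`. -/
theorem Mminor_is_monomial (n : ℕ) (hn : 2 ≤ n)
    (j k : ℕ) (hj : 1 ≤ j) (hjk : j ≤ k) (hk : k ≤ n - 1) :
    ∃ d : ℕ → ℕ, ∀ t : ℕ → ℝ,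
      Mminor n j k (Amat n t) = ∏ i ∈ Finset.range (Npar n), t i ^ d i := by
  obtain ⟨s, hs⟩ : ∃ s, s = n - k - 1 := ⟨_, rfl⟩
  obtain ⟨q, hq⟩ : ∃ q, q = k + 1 - j := ⟨_, rfl⟩
  have hex : ∀ m, ∃ f, m + 1 < n → (MonoF (Npar n) f ∧ ∀ t : ℕ → ℝ,
      act n (tl n 0 (2 * (n / 2))) t idF (n - 1 - m) (n + m) = (-1) ^ (n - 1 - m) * f t) := by
    intro m
    by_cases hm : m + 1 < n
    · obtain ⟨f, h1, h2⟩ := tl_mono hn (2 * (n / 2)) 0 (by omega) (n - 1 - m) m (by omega) hm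
        (by omega)
      refine ⟨f, fun _ => ⟨by rw [Npar_eq]; exact h1, fun t => ?_⟩⟩
      rw [← h2]
      congr 1
      simp only [Ei, hot, Nat.zero_mod, if_true]
      split_ifs <;> omega
    · exact ⟨fun _ => 0, fun h => absurd h hm⟩
  choose f hf using hex
  have hU := tl_det hn j s (by omega) (2 * (n / 2)) 0 (by omega) (by omega)
  rw [← Npar_eq] at hU
  have hP := MonoF.prod (N := Npar n) (s + q) f (fun m hm => (hf m (by omega)).1)
  obtain ⟨d, hd⟩ := hP.mul hU
  refine ⟨d, fun t => ?_⟩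
  rw [← hd t, Mminor]
  subst hs
  rw [main_eq n j (n - k - 1) hn (by omega) t]
  have hdet := dt_cF j (fun i c => act n (tl n 0 (2 * (n / 2))) t idF i (n - k - 1 + c)) q
    (n - k - 1) (fun i m => act n (tl n 0 (2 * (n / 2))) t idF i (n + m)) (fun m => f m t)
    (by
      intro i m hm him
      have := tl_zero hn (2 * (n / 2)) 0 (by omega) t i m (by omega) (by omega) (by omega)
      rwa [Ei, if_neg (by omega)] at this)
    (by
      intro i m hm him
      obtain rfl : i = n - 1 - m := by omega
      exact (hf m (by omega)).2 t)
  rw [show n - k - 1 + j + q = n by omega] at hdet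
  rw [hdet]
  have hsign : (-1 : ℝ) ^ (j * k) * (-1) ^ (j * q) = 1 := by
    rw [← pow_add]
    apply Even.neg_one_pow
    obtain ⟨x, rfl⟩ : ∃ x, k = j + x := ⟨k - j, by omega⟩
    obtain rfl : q = x + 1 := by omega
    have : j * (j + x) + j * (x + 1) = j * (j + 1) + 2 * (j * x) := by ring
    rw [this]
    exact (Nat.even_mul_succ_self j).add (even_two_mul _)
  simp only [zero_add]
  rw [mul_assoc ((-1 : ℝ) ^ (j * q)), ← mul_assoc, hsign, one_mul]
end
end
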